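/- (Spectral bounds for the item-item Laplacians, Lemma A.3) Suppose mp ≥ 2, np ≥ C κ₂² log(n) for a sufficiently large universal constant C > 0, and m ≤ n^α for some constant α > 0. Then with probability at least 1 − 10 n^{−10}: (i) np/(4κ₂) ≤ λ_{m−1}(L_L) ≤ λ₁(L_L) ≤ 3np, and (ii) np/(16 κ₁ κ₂) ≤ λ_{m−1}(L_{Lz}) ≤ λ₁(L_{Lz}) ≤ np, where λ₁ ≥ … ≥ λ_m denote eigenvalues in decreasing order. -/

import Mathlib

open MeasureTheory ProbabilityTheory Matrix Finset

namespace RaschRP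

variable {n m : ℕ}

/-- Probability that `X t i = 1` in the Rasch model. -/
noncomputable def q (ζ : Fin n → ℝ) (θ : Fin m → ℝ) (t : Fin n) (i : Fin m) : ℝ :=
  Real.exp (θ i) / (Real.exp (ζ t) + Real.exp (θ i))

/-- The set of items observed by user `t` under the sampling configuration `a`. -/
def obs (a : Fin n → Fin m → Bool) (t : Fin n) : Finset (Fin m) :=
  Finset.univ.filter fun i => a t i = true

/-- `r` is a maximal disjoint pairing (partial matching with `⌊|s|/2⌋` pairs) of the
item set `s`. -/
def IsPairing (s : Finset (Fin m)) (r : Fin m → Fin m → Bool) : Prop :=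
  (∀ i j, r i j = r j i) ∧ (∀ i, r i i = false) ∧
    (∀ i j, r i j = true → i ∈ s ∧ j ∈ s) ∧
    (∀ i j k, r i j = true → r i k = true → j = k) ∧
    (Finset.univ.filter fun ij : Fin m × Fin m => ij.1 < ij.2 ∧ r ij.1 ij.2 = true).card
      = s.card / 2

/-- The number of maximal disjoint pairings of `s`. -/
noncomputable def pairingCount (s : Finset (Fin m)) : ℕ :=
  Nat.card {r : Fin m → Fin m → Bool // IsPairing s r}

/-- `ℓ t i j = true` iff items `i, j` were paired for user `t` and the two responses were
discordant (an effective item-item comparison). -/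
def disc (x : Fin n → Fin m → Bool) (r : Fin n → Fin m → Fin m → Bool) :
    Fin n → Fin m → Fin m → Bool :=
  fun t i j => r t i j && (x t i != x t j)

/-- `L_{ij}`, the number of effective comparisons between items `i` and `j`. -/
def Lcount (ℓ : Fin n → Fin m → Fin m → Bool) (i j : Fin m) : ℕ :=
  ∑ t, if ℓ t i j = true then 1 else 0

/-- The negative log-likelihood of the induced item-item (Bradley–Terry) comparisons:
`L(θ) = Σ_{i>j} Σ_{t : L^t_{ij} = 1} ( −Y^t_{ji}(θ_i − θ_j) + log(1 + e^{θ_i − θ_j}) )`. -/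
noncomputable def loss (x : Fin n → Fin m → Bool) (ℓ : Fin n → Fin m → Fin m → Bool)
    (θ : Fin m → ℝ) : ℝ :=
  ∑ t, ∑ i, ∑ j,
    if j < i ∧ ℓ t i j = true then
      -(if x t i = true ∧ x t j = false then θ i - θ j else 0)
        + Real.log (1 + Real.exp (θ i - θ j))
    else 0

/-- The Bradley–Terry variance weight `z_{ij}(θ) = e^{θ_i} e^{θ_j}/(e^{θ_i}+e^{θ_j})²`. -/
noncomputable def z (θ : Fin m → ℝ) (i j : Fin m) : ℝ :=
  Real.exp (θ i) * Real.exp (θ j) / (Real.exp (θ i) + Real.exp (θ j)) ^ 2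

/-- The unweighted item-item Laplacian `L_L = Σ_{i>j} L_{ij}(e_i−e_j)(e_i−e_j)ᵀ`. -/
noncomputable def lapL (ℓ : Fin n → Fin m → Fin m → Bool) : Matrix (Fin m) (Fin m) ℝ :=
  ∑ ij : Fin m × Fin m,
    if ij.2 < ij.1 then
      (Lcount ℓ ij.1 ij.2 : ℝ) •
        Matrix.vecMulVec (Pi.single ij.1 (1 : ℝ) - Pi.single ij.2 1)
          (Pi.single ij.1 (1 : ℝ) - Pi.single ij.2 1)
    else 0

/-- The weighted item-item Laplacian `L_{Lz̃} = Σ_{i>j} L_{ij} z̃_{ij}(e_i−e_j)(e_i−e_j)ᵀ`,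
with weights `z̃ = z(θ)` computed from the parameter vector `θ`. -/
noncomputable def lapLz (θ : Fin m → ℝ) (ℓ : Fin n → Fin m → Fin m → Bool) :
    Matrix (Fin m) (Fin m) ℝ :=
  ∑ ij : Fin m × Fin m,
    if ij.2 < ij.1 then
      ((Lcount ℓ ij.1 ij.2 : ℝ) * z θ ij.1 ij.2) •
        Matrix.vecMulVec (Pi.single ij.1 (1 : ℝ) - Pi.single ij.2 1)
          (Pi.single ij.1 (1 : ℝ) - Pi.single ij.2 1)
    else 0

/-- `Mdag` is the Moore–Penrose pseudo-inverse of `M`. -/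
def IsMoorePenrose {k : ℕ} (M Mdag : Matrix (Fin k) (Fin k) ℝ) : Prop :=
  M * Mdag * M = M ∧ Mdag * M * Mdag = Mdag ∧ (M * Mdag)ᵀ = M * Mdag ∧
    (Mdag * M)ᵀ = Mdag * M

open scoped Classical in
/-- The Moore–Penrose pseudo-inverse of a square real matrix. -/
noncomputable def pinv {k : ℕ} (M : Matrix (Fin k) (Fin k) ℝ) : Matrix (Fin k) (Fin k) ℝ :=
  if h : ∃ N, IsMoorePenrose M N then h.choose else 0

/-- The gradient `∇L(θ)` of the negative log-likelihood `loss`, evaluated via the explicit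
formula `∇L(θ) = Σ_{i>j} Σ_{t : L^t_{ij}=1} (−Y^t_{ji} + σ(θ_i − θ_j)) (e_i − e_j)`. -/
noncomputable def gradLoss (θ : Fin m → ℝ) (x : Fin n → Fin m → Bool)
    (ℓ : Fin n → Fin m → Fin m → Bool) : Fin m → ℝ :=
  fun l => ∑ t, ∑ i, ∑ j,
    if j < i ∧ ℓ t i j = true then
      (-(if x t i = true ∧ x t j = false then (1 : ℝ) else 0)
          + Real.exp (θ i) / (Real.exp (θ i) + Real.exp (θ j)))
        * ((if l = i then (1 : ℝ) else 0) - if l = j then 1 else 0)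
    else 0

/-- The product `B ε̂ ∈ ℝ^m`, i.e.
`Σ_{i>j} Σ_{t : L^t_{ij}=1} (Y^t_{ji} − σ(θ⋆_i − θ⋆_j)) (e_i − e_j)`. -/
noncomputable def Beps (θ : Fin m → ℝ) (x : Fin n → Fin m → Bool)
    (ℓ : Fin n → Fin m → Fin m → Bool) : Fin m → ℝ :=
  fun l => ∑ t, ∑ i, ∑ j,
    if j < i ∧ ℓ t i j = true then
      ((if x t i = true ∧ x t j = false then (1 : ℝ) else 0)
          - Real.exp (θ i) / (Real.exp (θ i) + Real.exp (θ j)))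
        * ((if l = i then (1 : ℝ) else 0) - if l = j then 1 else 0)
    else 0

/-- The complete law of the data of the RP-MLE model with `K` independent random splittings:
the sampling indicators `A` are i.i.d. Bernoulli(`p`), the responses `X` are independent
with `P[X t i = 1] = e^{θ_i}/(e^{ζ_t}+e^{θ_i})`, and, conditionally on `A`, each of the `K`
random pairings is uniformly distributed over the maximal disjoint pairings of each user's
observed items, independently of everything else. -/
def HasRaschLaw {Ω : Type*} [MeasurableSpace Ω] (P : Measure Ω) {K : ℕ}
    (p : ℝ) (ζ : Fin n → ℝ) (θ : Fin m → ℝ)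
    (A X : Ω → Fin n → Fin m → Bool)
    (R : Ω → Fin K → Fin n → Fin m → Fin m → Bool) : Prop :=
  (∀ ω k t, IsPairing (obs (A ω) t) (R ω k t)) ∧
    ∀ (a x : Fin n → Fin m → Bool) (r : Fin K → Fin n → Fin m → Fin m → Bool),
      (∀ k' t, IsPairing (obs a t) (r k' t)) →
      P {ω | A ω = a ∧ X ω = x ∧ R ω = r} =
        ENNReal.ofReal ((∏ t, ∏ i, if a t i then p else 1 - p) *
          (∏ t, ∏ i, if x t i then q ζ θ t i else 1 - q ζ θ t i) *
          ∏ k : Fin K, ∏ t, ((pairingCount (obs a t) : ℝ))⁻¹)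

/-- `θhat` is an RP-MLE: a minimizer of the induced Bradley–Terry negative log-likelihood
over the hyperplane `{θ : 1ᵀθ = 0}`. -/
def IsRPMLE (x : Fin n → Fin m → Bool) (ℓ : Fin n → Fin m → Fin m → Bool)
    (θhat : Fin m → ℝ) : Prop :=
  (∑ i, θhat i) = 0 ∧
    ∀ θ' : Fin m → ℝ, (∑ i, θ' i) = 0 → loss x ℓ θhat ≤ loss x ℓ θ'

end RaschRP

/-!
The matrix `L_L` is a sum over the users of independent positive semidefinite matrices of norm at
most `2`, because within one user every item is compared at most once. The matrix Chernoff bound,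
which rests on the Golden–Thompson inequality `tr e^(A+B) ≤ tr (e^A e^B)`, reduces the theorem to
Loewner bounds on the expected contribution of a single user. Its row sums are at most `p`, which
gives the upper bound. For the lower bound, every pair of items is selected with the same
probability by exchangeability, and summing over the pairs evaluates it as
`E[2 ⌊K/2⌋] / (m (m - 1)) ≥ 2p / (3m)` with `K ∼ Bin(m, p)`, while a selected pair is discordant
with probability at least `1 / (2κ₂)`. A multiple of `1 1ᵀ` added to each summand makes up for the
common kernel vector `1`. Finally `1 / (4κ₁) ≤ z ≤ 1 / 4` transfers the bounds from `L_L` to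
`L_{Lz}`.
-/

namespace RaschRP

section LieProductFormula

open NormedSpace Filter Topology

theorem norm_pow_sub_pow_le {𝔸 : Type*} [NormedRing 𝔸] {x y : 𝔸} {c : ℝ} (hc : 1 ≤ c)
    (hx : ‖x‖ ≤ c) (hy : ∀ k : ℕ, ‖y ^ k‖ ≤ c ^ k) (N : ℕ) :
    ‖x ^ N - y ^ N‖ ≤ N * c ^ N * ‖x - y‖ := by
  induction N with
  | zero => simp
  | succ N ih =>
    have htelescope : x ^ (N + 1) - y ^ (N + 1) = x * (x ^ N - y ^ N) + (x - y) * y ^ N := by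
      rw [pow_succ' x, pow_succ' y]
      noncomm_ring
    calc ‖x ^ (N + 1) - y ^ (N + 1)‖ ≤ ‖x‖ * ‖x ^ N - y ^ N‖ + ‖x - y‖ * ‖y ^ N‖ := by
          rw [htelescope]
          exact (norm_add_le _ _).trans (add_le_add (norm_mul_le _ _) (norm_mul_le _ _))
      _ ≤ c * (N * c ^ N * ‖x - y‖) + ‖x - y‖ * c ^ (N + 1) := by
          gcongr
          exact (hy N).trans (pow_le_pow_right₀ hc N.le_succ)
      _ = (N + 1 : ℕ) * c ^ (N + 1) * ‖x - y‖ := by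
          push_cast
          ring

theorem tendsto_natCast_mul_norm_inv {E : Type*} [NormedAddCommGroup E] [NormedSpace ℝ E]
    {f : ℝ → E} (hf : HasDerivAt f 0 0) (hf0 : f 0 = 0) :
    Tendsto (fun N : ℕ => (N : ℝ) * ‖f (N : ℝ)⁻¹‖) atTop (𝓝 0) := by
  have ho := hasDerivAt_iff_isLittleO_nhds_zero.mp hf
  simp only [zero_add, hf0, smul_zero, sub_zero] at ho
  have hlim := (ho.comp_tendsto
    (tendsto_inv_atTop_nhds_zero_nat (𝕜 := ℝ))).norm_left.tendsto_div_nhds_zero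
  refine hlim.congr fun N => ?_
  simp [div_eq_mul_inv, mul_comm]

variable {𝔸 : Type*} [NormedRing 𝔸] [NormedAlgebra ℝ 𝔸] [CompleteSpace 𝔸]

theorem norm_exp_le_exp_norm [NormOneClass 𝔸] (x : 𝔸) : ‖exp x‖ ≤ Real.exp ‖x‖ := by
  have hreal := exp_series_hasSum_exp' (𝕂 := ℝ) ‖x‖
  rw [← Real.exp_eq_exp_ℝ] at hreal
  refine (exp_series_hasSum_exp' (𝕂 := ℝ) x).norm_le_of_bounded hreal fun k => ?_
  rw [norm_smul, smul_eq_mul, Real.norm_of_nonneg (by positivity)]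
  gcongr
  exact norm_pow_le x k

theorem exp_natCast_inv_smul_pow (a : 𝔸) {N : ℕ} (hN : N ≠ 0) :
    exp ((N : ℝ)⁻¹ • a) ^ N = exp a := by
  let _ : NormedAlgebra ℚ 𝔸 := .restrictScalars ℚ ℝ 𝔸
  rw [← NormedSpace.exp_nsmul, ← Nat.cast_smul_eq_nsmul ℝ, smul_smul,
    mul_inv_cancel₀ (Nat.cast_ne_zero.mpr hN), one_smul]

theorem hasDerivAt_exp_smul_mul_exp_smul_sub (a b : 𝔸) :
    HasDerivAt (fun u : ℝ => exp (u • a) * exp (u • b) - exp (u • (a + b))) 0 0 := by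
  have h := ((hasDerivAt_exp_smul_const (𝕂 := ℝ) a 0).mul
    (hasDerivAt_exp_smul_const (𝕂 := ℝ) b 0)).sub (hasDerivAt_exp_smul_const (𝕂 := ℝ) (a + b) 0)
  exact h.congr_deriv (by simp)

theorem norm_exp_mul_exp_pow_sub_exp_add_le [NormOneClass 𝔸] (a b : 𝔸) {N : ℕ} (hN : N ≠ 0) :
    ‖(exp ((N : ℝ)⁻¹ • a) * exp ((N : ℝ)⁻¹ • b)) ^ N - exp (a + b)‖ ≤
      N * ‖exp ((N : ℝ)⁻¹ • a) * exp ((N : ℝ)⁻¹ • b) - exp ((N : ℝ)⁻¹ • (a + b))‖ *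
        Real.exp (‖a‖ + ‖b‖) := by
  have hexp (x : 𝔸) : ‖exp ((N : ℝ)⁻¹ • x)‖ ≤ Real.exp ((N : ℝ)⁻¹ * ‖x‖) :=
    (norm_exp_le_exp_norm _).trans_eq (by rw [norm_smul, Real.norm_of_nonneg (by positivity)])
  set c := Real.exp ((N : ℝ)⁻¹ * (‖a‖ + ‖b‖)) with hc
  have hcN : c ^ N = Real.exp (‖a‖ + ‖b‖) := by
    rw [hc, ← Real.exp_nat_mul, mul_inv_cancel_left₀ (Nat.cast_ne_zero.mpr hN)]
  have hprod : ‖exp ((N : ℝ)⁻¹ • a) * exp ((N : ℝ)⁻¹ • b)‖ ≤ c := by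
    rw [hc, mul_add, Real.exp_add]
    exact (norm_mul_le _ _).trans (mul_le_mul (hexp a) (hexp b) (norm_nonneg _) (Real.exp_nonneg _))
  have hsum (k : ℕ) : ‖exp ((N : ℝ)⁻¹ • (a + b)) ^ k‖ ≤ c ^ k :=
    (norm_pow_le _ k).trans <| pow_le_pow_left₀ (norm_nonneg _)
      ((hexp _).trans (Real.exp_le_exp.mpr (by gcongr; exact norm_add_le a b))) k
  have h := norm_pow_sub_pow_le (Real.one_le_exp (by positivity)) hprod hsum N
  rw [exp_natCast_inv_smul_pow _ hN, hcN] at h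
  exact h.trans_eq (mul_right_comm _ _ _)

theorem tendsto_exp_mul_exp_pow [NormOneClass 𝔸] (a b : 𝔸) :
    Tendsto (fun N : ℕ => (exp ((N : ℝ)⁻¹ • a) * exp ((N : ℝ)⁻¹ • b)) ^ N) atTop
      (𝓝 (exp (a + b))) := by
  rw [tendsto_iff_norm_sub_tendsto_zero]
  have hlim := (tendsto_natCast_mul_norm_inv (hasDerivAt_exp_smul_mul_exp_smul_sub a b)
    (by simp)).mul_const (Real.exp (‖a‖ + ‖b‖))
  rw [zero_mul] at hlim
  refine squeeze_zero' (Eventually.of_forall fun _ => norm_nonneg _) ?_ hlim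
  filter_upwards [eventually_ne_atTop 0] with N hN
  exact norm_exp_mul_exp_pow_sub_exp_add_le a b hN

end LieProductFormula

section GoldenThompson

open NormedSpace Filter Topology RCLike
open scoped Matrix.Norms.Operator ComplexOrder

variable {ι 𝕜 : Type*} [Fintype ι] [RCLike 𝕜]

theorem re_trace_mul_conjTranspose (A : Matrix ι ι 𝕜) :
    re (A * Aᴴ).trace = ∑ i, ∑ j, ‖A i j‖ ^ 2 := by
  simp only [Matrix.trace, diag_apply, mul_apply, conjTranspose_apply, star_def, map_sum,
    RCLike.mul_conj]
  norm_cast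

theorem norm_trace_mul_sq_le (A B : Matrix ι ι 𝕜) :
    ‖(A * B).trace‖ ^ 2 ≤ re (A * Aᴴ).trace * re (B * Bᴴ).trace := by
  have hnorm : ‖(A * B).trace‖ ≤ ∑ x : ι × ι, ‖A x.1 x.2‖ * ‖B x.2 x.1‖ := by
    simp only [Matrix.trace, diag_apply, mul_apply, Fintype.sum_prod_type, ← norm_mul]
    exact (norm_sum_le _ _).trans (sum_le_sum fun i _ => norm_sum_le _ _)
  refine (pow_le_pow_left₀ (norm_nonneg _) hnorm 2).trans
    ((sum_mul_sq_le_sq_mul_sq _ _ _).trans_eq ?_)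
  rw [re_trace_mul_conjTranspose, re_trace_mul_conjTranspose, Fintype.sum_prod_type,
    Fintype.sum_prod_type_right]

variable [DecidableEq ι]

theorem trace_mul_pow_comm (A B : Matrix ι ι 𝕜) (k : ℕ) :
    ((A * B) ^ k).trace = ((B * A) ^ k).trace := by
  cases k with
  | zero => simp
  | succ k => rw [pow_succ, ← mul_assoc, mul_pow_mul, trace_mul_comm, ← mul_assoc, ← pow_succ']

theorem norm_trace_mul_pow_sq_le (k : ℕ) (A B : Matrix ι ι 𝕜) :
    ‖((A * B) ^ 2 ^ k).trace‖ ^ 2 ≤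
      re ((A * Aᴴ) ^ 2 ^ k).trace * re ((B * Bᴴ) ^ 2 ^ k).trace := by
  induction k generalizing A B with
  | zero => simpa using norm_trace_mul_sq_le A B
  | succ k ih =>
    have hsq (C : Matrix ι ι 𝕜) : C ^ 2 ^ (k + 1) = (C * C) ^ 2 ^ k := by
      rw [← pow_two, ← pow_mul, pow_succ']
    have hcyclic : ((A * B * (A * B)ᴴ) ^ 2 ^ k).trace = ((Aᴴ * A * (B * Bᴴ)) ^ 2 ^ k).trace := by
      rw [conjTranspose_mul, ← mul_assoc, trace_mul_pow_comm]
      simp only [mul_assoc]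
    calc ‖((A * B) ^ 2 ^ (k + 1)).trace‖ ^ 2
        ≤ re ((A * B * (A * B)ᴴ) ^ 2 ^ k).trace ^ 2 := by
          rw [hsq, pow_two (re _)]
          exact ih (A * B) (A * B)
      _ ≤ ‖((Aᴴ * A * (B * Bᴴ)) ^ 2 ^ k).trace‖ ^ 2 := by
          rw [hcyclic, ← sq_abs]
          exact pow_le_pow_left₀ (abs_nonneg _) (abs_re_le_norm _) 2
      _ ≤ re ((Aᴴ * A * (Aᴴ * A)ᴴ) ^ 2 ^ k).trace * re ((B * Bᴴ * (B * Bᴴ)ᴴ) ^ 2 ^ k).trace :=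
          ih (Aᴴ * A) (B * Bᴴ)
      _ = re ((A * Aᴴ) ^ 2 ^ (k + 1)).trace * re ((B * Bᴴ) ^ 2 ^ (k + 1)).trace := by
          rw [conjTranspose_mul Aᴴ, conjTranspose_mul B, conjTranspose_conjTranspose,
            conjTranspose_conjTranspose, ← hsq, ← hsq, trace_mul_pow_comm Aᴴ]

theorem re_trace_pow_le_re_trace_mul_conjTranspose_pow (C : Matrix ι ι 𝕜) (k : ℕ) :
    re (C ^ 2 ^ (k + 1)).trace ≤ re ((C * Cᴴ) ^ 2 ^ k).trace := by
  have hnonneg : 0 ≤ re ((C * Cᴴ) ^ 2 ^ k).trace :=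
    (RCLike.nonneg_iff.mp ((posSemidef_self_mul_conjTranspose C).pow _).trace_nonneg).1
  have h := norm_trace_mul_pow_sq_le k C C
  rw [← pow_two, ← pow_two, ← pow_mul, ← pow_succ'] at h
  exact (re_le_norm _).trans (le_of_sq_le_sq h hnonneg)

theorem re_trace_mul_pow_le (k : ℕ) {X Y : Matrix ι ι 𝕜} (hX : X.IsHermitian)
    (hY : Y.IsHermitian) :
    re ((X * Y) ^ 2 ^ k).trace ≤ re (X ^ 2 ^ k * Y ^ 2 ^ k).trace := by
  induction k generalizing X Y with
  | zero => simp
  | succ k ih =>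
    have hcyclic : ((X * Y * (X * Y)ᴴ) ^ 2 ^ k).trace = ((X ^ 2 * Y ^ 2) ^ 2 ^ k).trace := by
      rw [conjTranspose_mul, hX.eq, hY.eq, ← mul_assoc, trace_mul_pow_comm]
      simp only [pow_two, mul_assoc]
    calc re ((X * Y) ^ 2 ^ (k + 1)).trace ≤ re ((X ^ 2 * Y ^ 2) ^ 2 ^ k).trace :=
          hcyclic ▸ re_trace_pow_le_re_trace_mul_conjTranspose_pow (X * Y) k
      _ ≤ re ((X ^ 2) ^ 2 ^ k * (Y ^ 2) ^ 2 ^ k).trace := ih (hX.pow 2) (hY.pow 2)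
      _ = re (X ^ 2 ^ (k + 1) * Y ^ 2 ^ (k + 1)).trace := by
          rw [← pow_mul, ← pow_mul, ← pow_succ']

/-- The **Golden–Thompson inequality**. -/
theorem re_trace_exp_add_le [Nonempty ι] {A B : Matrix ι ι 𝕜} (hA : A.IsHermitian)
    (hB : B.IsHermitian) : re (exp (A + B)).trace ≤ re (exp A * exp B).trace := by
  have htrace : Continuous fun C : Matrix ι ι 𝕜 => re C.trace :=
    continuous_re.comp continuous_id.matrix_trace
  have hlim := (htrace.tendsto _).comp ((tendsto_exp_mul_exp_pow A B).comp
    (tendsto_pow_atTop_atTop_of_one_lt (one_lt_two (α := ℕ))))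
  refine le_of_tendsto' hlim fun k => ?_
  have hherm {C : Matrix ι ι 𝕜} (hC : C.IsHermitian) :
      (exp (((2 ^ k : ℕ) : ℝ)⁻¹ • C)).IsHermitian := (hC.smul (.all _)).exp
  have hpow (C : Matrix ι ι 𝕜) : exp (((2 ^ k : ℕ) : ℝ)⁻¹ • C) ^ 2 ^ k = exp C :=
    exp_natCast_inv_smul_pow C (by positivity)
  have h := re_trace_mul_pow_le k (hherm hA) (hherm hB)
  rwa [hpow, hpow] at h

end GoldenThompson

section MatrixExponential

open NormedSpace RCLike
open scoped MatrixOrder ComplexOrder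

variable {ι 𝕜 : Type*} [Fintype ι] [RCLike 𝕜]

theorem re_trace_mul_nonneg {A B : Matrix ι ι 𝕜} (hA : 0 ≤ A) (hB : 0 ≤ B) :
    0 ≤ re (A * B).trace := by
  classical
  obtain ⟨S, rfl⟩ := CStarAlgebra.nonneg_iff_eq_star_mul_self.mp hA
  rw [mul_assoc, trace_mul_comm]
  exact (RCLike.nonneg_iff.mp (hB.posSemidef.mul_mul_conjTranspose_same S).trace_nonneg).1

variable [DecidableEq ι]

theorem re_trace_mul_le_of_le_smul_one {E S : Matrix ι ι 𝕜} {c : ℝ} (hE : 0 ≤ E)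
    (hS : S ≤ c • 1) : re (E * S).trace ≤ c * re E.trace := by
  have h := re_trace_mul_nonneg hE (sub_nonneg.mpr hS)
  rwa [mul_sub, trace_sub, map_sub, sub_nonneg, mul_smul_comm, mul_one, trace_smul, smul_re] at h

open scoped Matrix.Norms.L2Operator in
theorem cfc_exp_eq_exp {A : Matrix ι ι 𝕜} (hA : A.IsHermitian) : cfc Real.exp A = exp A := by
  let _ : NormedAlgebra ℝ (Matrix ι ι 𝕜) :=
    { norm_smul_le r B := by
        rw [← algebraMap_smul 𝕜 r B]
        exact (norm_smul_le _ _).trans_eq (by simp) }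
  exact CFC.real_exp_eq_normedSpace_exp hA

theorem exp_nonneg_of_isHermitian {A : Matrix ι ι 𝕜} (hA : A.IsHermitian) : 0 ≤ exp A :=
  cfc_exp_eq_exp hA ▸ cfc_nonneg fun x _ => Real.exp_nonneg x

theorem trace_cfc {A : Matrix ι ι 𝕜} (hA : A.IsHermitian) (f : ℝ → ℝ) :
    (cfc f A).trace = ∑ i, (f (hA.eigenvalues i) : 𝕜) := by
  rw [hA.cfc_eq, IsHermitian.cfc, Unitary.conjStarAlgAut_apply, trace_mul_cycle,
    Unitary.coe_star_mul_self, one_mul, trace_diagonal]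
  rfl

theorem exp_le_re_trace_exp_of_not_le {A : Matrix ι ι 𝕜} (hA : A.IsHermitian) {a : ℝ}
    (ha : ¬A ≤ a • 1) : Real.exp a ≤ re (exp A).trace := by
  obtain ⟨i, hi⟩ : ∃ i, a < hA.eigenvalues i := by
    contrapose! ha
    rw [← Algebra.algebraMap_eq_smul_one]
    refine le_algebraMap_of_spectrum_le (fun x hx => ?_) hA
    obtain ⟨i, rfl⟩ := hA.spectrum_real_eq_range_eigenvalues ▸ hx
    exact ha i
  calc Real.exp a ≤ Real.exp (hA.eigenvalues i) := Real.exp_le_exp.mpr hi.le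
    _ ≤ ∑ j, Real.exp (hA.eigenvalues j) :=
        single_le_sum (f := fun j => Real.exp (hA.eigenvalues j))
          (fun j _ => Real.exp_nonneg _) (mem_univ i)
    _ = re (exp A).trace := by simp [← cfc_exp_eq_exp hA, trace_cfc hA]

theorem exp_mul_le_one_add_mul {x : ℝ} (hx0 : 0 ≤ x) (hx1 : x ≤ 1) (s : ℝ) :
    Real.exp (s * x) ≤ 1 + (Real.exp s - 1) * x := by
  have h := convexOn_exp.2 (Set.mem_univ 0) (Set.mem_univ s) (sub_nonneg.mpr hx1) hx0
    (sub_add_cancel 1 x)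
  simp only [smul_eq_mul, mul_zero, zero_add, Real.exp_zero, mul_one] at h
  linarith [mul_comm x s ▸ h]

theorem exp_smul_le_one_add_smul {X : Matrix ι ι 𝕜} (hX0 : 0 ≤ X) (hX1 : X ≤ 1) (s : ℝ) :
    exp (s • X) ≤ 1 + (Real.exp s - 1) • X := by
  have hX : IsSelfAdjoint X := .of_nonneg hX0
  have hspec (x : ℝ) (hx : x ∈ spectrum ℝ X) : x ≤ 1 :=
    (le_algebraMap_iff_spectrum_le hX).mp (by rwa [map_one]) x hx
  calc exp (s • X) = cfc (fun x => Real.exp (s * x)) X := by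
        rw [cfc_comp_const_mul s Real.exp X, cfc_exp_eq_exp (hX.isHermitian.smul (.all s))]
    _ ≤ cfc (fun x => 1 + (Real.exp s - 1) * x) X :=
        cfc_mono fun x hx => exp_mul_le_one_add_mul (spectrum_nonneg_of_nonneg hX0 hx)
          (hspec x hx) s
    _ = 1 + (Real.exp s - 1) • X := by
        rw [cfc_const_add .., cfc_const_mul_id .., map_one]

end MatrixExponential
section MatrixChernoff

open NormedSpace RCLike
open scoped MatrixOrder ComplexOrder

theorem exp_neg_le_one_sub_add_sq_div_two {x : ℝ} (hx : 0 ≤ x) :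
    Real.exp (-x) ≤ 1 - x + x ^ 2 / 2 := by
  rw [Real.exp_neg, inv_le_iff_one_le_mul₀' (Real.exp_pos x)]
  calc (1 : ℝ) ≤ (1 + x + x ^ 2 / 2) * (1 - x + x ^ 2 / 2) := by nlinarith [sq_nonneg (x ^ 2)]
    _ ≤ Real.exp x * (1 - x + x ^ 2 / 2) := by
        gcongr
        · nlinarith [sq_nonneg (x - 1)]
        · exact Real.quadratic_le_exp_of_nonneg hx

theorem exp_le_one_add_add_sq {x : ℝ} (hx0 : 0 ≤ x) (hx1 : x ≤ 1) :
    Real.exp x ≤ 1 + x + 3 / 4 * x ^ 2 := by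
  have h := Real.exp_bound (abs_le.mpr ⟨by linarith, hx1⟩) (n := 2) two_pos
  norm_num [sum_range_succ, Nat.factorial] at h
  linarith [(abs_le.mp h).2]

variable {n : ℕ} {ι 𝕜 V : Type*} [Fintype ι] [DecidableEq ι] [RCLike 𝕜] [Fintype V]
  {w : Fin n → V → ℝ}

theorem sum_prod_mul_re_trace_exp_add_sum_le [Nonempty ι] (hw : ∀ t u, 0 ≤ w t u)
    {M : Fin n → V → Matrix ι ι 𝕜} (hM : ∀ t u, (M t u).IsHermitian) {c : Fin n → ℝ}
    (hMc : ∀ t, ∑ u, w t u • exp (M t u) ≤ c t • 1) (hc : ∀ t, 0 ≤ c t)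
    {H : Matrix ι ι 𝕜} (hH : H.IsHermitian) :
    ∑ u : Fin n → V, (∏ t, w t (u t)) * re (exp (H + ∑ t, M t (u t))).trace ≤
      (∏ t, c t) * re (exp H).trace := by
  induction n generalizing H with
  | zero => simp
  | succ n ih =>
    calc ∑ u : Fin (n + 1) → V, (∏ t, w t (u t)) * re (exp (H + ∑ t, M t (u t))).trace
        = ∑ x, w 0 x * ∑ u : Fin n → V, (∏ t, w t.succ (u t)) *
            re (exp (H + M 0 x + ∑ t, M t.succ (u t))).trace := by
          rw [← (Fin.consEquiv fun _ => V).sum_comp, Fintype.sum_prod_type]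
          simp only [Fin.consEquiv_apply, Fin.prod_univ_succ, Fin.sum_univ_succ, Fin.cons_zero,
            Fin.cons_succ, mul_sum, mul_assoc, add_assoc]
      _ ≤ ∑ x, w 0 x * ((∏ t : Fin n, c t.succ) * re (exp H * exp (M 0 x)).trace) := by
          gcongr with x _
          · exact hw 0 x
          · refine (ih (fun t => hw t.succ) (fun t => hM t.succ) (fun t => hMc t.succ)
              (fun t => hc t.succ) (hH.add (hM 0 x))).trans ?_
            exact mul_le_mul_of_nonneg_left (re_trace_exp_add_le hH (hM 0 x))
              (prod_nonneg fun t _ => hc t.succ)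
      _ = (∏ t : Fin n, c t.succ) * re (exp H * ∑ x, w 0 x • exp (M 0 x)).trace := by
          simp only [mul_sum, mul_smul_comm, trace_sum, trace_smul, map_sum, smul_re,
            mul_left_comm]
      _ ≤ (∏ t : Fin n, c t.succ) * (c 0 * re (exp H).trace) := by
          gcongr
          · exact prod_nonneg fun t _ => hc t.succ
          · exact re_trace_mul_le_of_le_smul_one (exp_nonneg_of_isHermitian hH) (hMc 0)
      _ = (∏ t, c t) * re (exp H).trace := by
          rw [Fin.prod_univ_succ]
          ring

open scoped Classical in
theorem sum_prod_filter_not_sum_le (hw : ∀ t u, 0 ≤ w t u) {M : Fin n → V → Matrix ι ι 𝕜}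
    (hM : ∀ t u, (M t u).IsHermitian) {c : Fin n → ℝ}
    (hMc : ∀ t, ∑ u, w t u • exp (M t u) ≤ c t • 1) (hc : ∀ t, 0 ≤ c t) (a : ℝ) :
    ∑ u : Fin n → V with ¬∑ t, M t (u t) ≤ a • 1, ∏ t, w t (u t) ≤
      Fintype.card ι * (Real.exp (-a) * ∏ t, c t) := by
  rcases isEmpty_or_nonempty ι with _ | _
  · simp [Subsingleton.elim (∑ t, M t _) (a • 1)]
  have hprod (u : Fin n → V) : 0 ≤ ∏ t, w t (u t) := prod_nonneg fun t _ => hw t (u t)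
  have hherm (u : Fin n → V) : (∑ t, M t (u t)).IsHermitian :=
    isSelfAdjoint_sum _ fun t _ => hM t (u t)
  calc ∑ u : Fin n → V with ¬∑ t, M t (u t) ≤ a • 1, ∏ t, w t (u t)
      ≤ ∑ u : Fin n → V with ¬∑ t, M t (u t) ≤ a • 1, Real.exp (-a) *
          ((∏ t, w t (u t)) * re (exp (∑ t, M t (u t))).trace) := by
        refine sum_le_sum fun u hu => ?_
        have h := exp_le_re_trace_exp_of_not_le (hherm u) (mem_filter.mp hu).2
        calc ∏ t, w t (u t) = Real.exp (-a) * ((∏ t, w t (u t)) * Real.exp a) := by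
              rw [mul_left_comm, ← Real.exp_add, neg_add_cancel, Real.exp_zero, mul_one]
          _ ≤ _ := by
              gcongr
              exact hprod u
    _ ≤ ∑ u : Fin n → V, Real.exp (-a) *
          ((∏ t, w t (u t)) * re (exp (∑ t, M t (u t))).trace) := by
        refine sum_le_univ_sum_of_nonneg fun u => ?_
        have := (exp_nonneg_of_isHermitian (hherm u)).posSemidef.trace_nonneg
        exact mul_nonneg (Real.exp_nonneg _)
          (mul_nonneg (hprod u) (RCLike.nonneg_iff.mp this).1)
    _ ≤ Real.exp (-a) * ((∏ t, c t) * Fintype.card ι) := by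
        rw [← mul_sum]
        gcongr
        simpa using sum_prod_mul_re_trace_exp_add_sum_le hw hM hMc hc
          (isHermitian_zero (n := ι) (α := 𝕜))
    _ = Fintype.card ι * (Real.exp (-a) * ∏ t, c t) := by ring

theorem sum_smul_exp_smul_le {w : V → ℝ} (hw : ∀ u, 0 ≤ w u) (hw1 : ∑ u, w u = 1)
    {X : V → Matrix ι ι 𝕜} (hX0 : ∀ u, 0 ≤ X u) (hX1 : ∀ u, X u ≤ 1) {s b : ℝ}
    (hb : (Real.exp s - 1) • ∑ u, w u • X u ≤ b • 1) :
    ∑ u, w u • exp (s • X u) ≤ Real.exp b • 1 :=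
  calc ∑ u, w u • exp (s • X u) ≤ ∑ u, w u • (1 + (Real.exp s - 1) • X u) := by
        gcongr with u
        · exact hw u
        · exact exp_smul_le_one_add_smul (hX0 u) (hX1 u) s
    _ = 1 + (Real.exp s - 1) • ∑ u, w u • X u := by
        simp only [smul_add, sum_add_distrib, ← sum_smul, hw1, one_smul, smul_sum,
          smul_comm (Real.exp s - 1)]
    _ ≤ (b + 1) • 1 := by
        rw [add_smul, one_smul, add_comm]
        gcongr
    _ ≤ Real.exp b • 1 := smul_le_smul_of_nonneg_right (Real.add_one_le_exp b) zero_le_one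

variable {X : Fin n → V → Matrix ι ι 𝕜}

open scoped Classical in
/-- The lower tail of the **matrix Chernoff bound** for independent random matrices, where `w t`
is the law of the `t`-th sample. -/
theorem sum_prod_filter_not_le_sum_le (hw : ∀ t u, 0 ≤ w t u) (hw1 : ∀ t, ∑ u, w t u = 1)
    (hX0 : ∀ t u, 0 ≤ X t u) (hX1 : ∀ t u, X t u ≤ 1) {μ : Fin n → ℝ} (hμ0 : ∀ t, 0 ≤ μ t)
    (hμ : ∀ t, μ t • 1 ≤ ∑ u, w t u • X t u) {δ : ℝ} (hδ : 0 < δ) :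
    ∑ u : Fin n → V with ¬((1 - δ) * ∑ t, μ t) • 1 ≤ ∑ t, X t (u t), ∏ t, w t (u t) ≤
      Fintype.card ι * Real.exp (-(δ ^ 2 * ∑ t, μ t) / 2) := by
  have hs : Real.exp (-δ) - 1 ≤ 0 := by simpa using hδ.le
  have hMc (t : Fin n) : ∑ u, w t u • exp (-δ • X t u) ≤
      Real.exp ((Real.exp (-δ) - 1) * μ t) • 1 :=
    sum_smul_exp_smul_le (hw t) (hw1 t) (hX0 t) (hX1 t)
      ((smul_le_smul_of_nonpos_left (hμ t) hs).trans_eq (smul_smul _ _ _))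
  have hevent (u : Fin n → V) : (((1 - δ) * ∑ t, μ t) • 1 ≤ ∑ t, X t (u t)) ↔
      ∑ t, -δ • X t (u t) ≤ (-δ * ((1 - δ) * ∑ t, μ t)) • 1 := by
    rw [← smul_sum, neg_mul, neg_smul, neg_smul, neg_le_neg_iff, mul_smul δ,
      smul_le_smul_iff_of_pos_left hδ]
  simp only [hevent]
  refine (sum_prod_filter_not_sum_le hw
    (fun t u => (IsSelfAdjoint.of_nonneg (hX0 t u)).isHermitian.smul (.all _)) hMc
    (fun t => Real.exp_nonneg _) _).trans ?_
  rw [← Real.exp_sum, ← mul_sum, ← Real.exp_add]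
  gcongr
  nlinarith [exp_neg_le_one_sub_add_sq_div_two hδ.le, sum_nonneg fun t (_ : t ∈ univ) => hμ0 t]

open scoped Classical in
/-- The upper tail of the **matrix Chernoff bound** for independent random matrices, where `w t`
is the law of the `t`-th sample. -/
theorem sum_prod_filter_not_sum_le_smul_le (hw : ∀ t u, 0 ≤ w t u) (hw1 : ∀ t, ∑ u, w t u = 1)
    (hX0 : ∀ t u, 0 ≤ X t u) (hX1 : ∀ t u, X t u ≤ 1) {ν : Fin n → ℝ} (hν0 : ∀ t, 0 ≤ ν t)
    (hν : ∀ t, ∑ u, w t u • X t u ≤ ν t • 1) {δ : ℝ} (hδ0 : 0 < δ) (hδ1 : δ ≤ 1) :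
    ∑ u : Fin n → V with ¬∑ t, X t (u t) ≤ ((1 + δ) * ∑ t, ν t) • 1, ∏ t, w t (u t) ≤
      Fintype.card ι * Real.exp (-(δ ^ 2 * ∑ t, ν t) / 4) := by
  have hs : 0 ≤ Real.exp δ - 1 := by simpa using hδ0.le
  have hMc (t : Fin n) : ∑ u, w t u • exp (δ • X t u) ≤
      Real.exp ((Real.exp δ - 1) * ν t) • 1 :=
    sum_smul_exp_smul_le (hw t) (hw1 t) (hX0 t) (hX1 t)
      ((smul_le_smul_of_nonneg_left (hν t) hs).trans_eq (smul_smul _ _ _))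
  have hevent (u : Fin n → V) : (∑ t, X t (u t) ≤ ((1 + δ) * ∑ t, ν t) • 1) ↔
      ∑ t, δ • X t (u t) ≤ (δ * ((1 + δ) * ∑ t, ν t)) • 1 := by
    rw [← smul_sum, mul_smul δ, smul_le_smul_iff_of_pos_left hδ0]
  simp only [hevent]
  refine (sum_prod_filter_not_sum_le hw
    (fun t u => (IsSelfAdjoint.of_nonneg (hX0 t u)).isHermitian.smul (.all _)) hMc
    (fun t => Real.exp_nonneg _) _).trans ?_
  rw [← Real.exp_sum, ← mul_sum, ← Real.exp_add]
  gcongr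
  nlinarith [exp_le_one_add_add_sq hδ0.le hδ1, sum_nonneg fun t (_ : t ∈ univ) => hν0 t]

end MatrixChernoff

section WeightedLaplacian

open scoped MatrixOrder ComplexOrder

theorem vecMulVec_self_nonneg {ι : Type*} [Finite ι] (v : ι → ℝ) : 0 ≤ vecMulVec v v :=
  nonneg_iff_posSemidef.mpr (posSemidef_vecMulVec_self_star v)

variable {ι : Type*} [Fintype ι]

theorem le_iff_forall_dotProduct_mulVec_le {A B : Matrix ι ι ℝ} (hA : A.IsHermitian)
    (hB : B.IsHermitian) : A ≤ B ↔ ∀ v, v ⬝ᵥ (A *ᵥ v) ≤ v ⬝ᵥ (B *ᵥ v) := by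
  rw [Matrix.le_iff, posSemidef_iff_dotProduct_mulVec, and_iff_right (hB.sub hA)]
  simp [sub_mulVec, dotProduct_sub]

theorem dotProduct_mulVec_le_of_le {A B : Matrix ι ι ℝ} (h : A ≤ B) (v : ι → ℝ) :
    v ⬝ᵥ (A *ᵥ v) ≤ v ⬝ᵥ (B *ᵥ v) := by
  simpa [sub_mulVec, dotProduct_sub] using (Matrix.le_iff.mp h).dotProduct_mulVec_nonneg v

theorem dotProduct_vecMulVec_one_mulVec (v : ι → ℝ) :
    v ⬝ᵥ (vecMulVec 1 1 *ᵥ v) = (∑ i, v i) ^ 2 := by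
  rw [vecMulVec_mulVec]
  simp [dotProduct, ← sum_mul, pow_two]

theorem dotProduct_smul_one_mulVec [DecidableEq ι] (a : ℝ) (v : ι → ℝ) :
    v ⬝ᵥ ((a • (1 : Matrix ι ι ℝ)) *ᵥ v) = a * ∑ i, v i ^ 2 := by
  rw [smul_mulVec, one_mulVec, dotProduct_smul, smul_eq_mul]
  simp only [dotProduct, pow_two]

variable [LinearOrder ι]

/-- The Laplacian `∑_{i > j} c i j (e_i - e_j)(e_i - e_j)ᵀ` of the graph with edge weights `c`, as a
linear function of `c`; only the entries `c i j` with `j < i` matter. -/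
noncomputable def weightedLaplacian : (ι → ι → ℝ) →ₗ[ℝ] Matrix ι ι ℝ where
  toFun c := ∑ ij : ι × ι,
    if ij.2 < ij.1 then
      c ij.1 ij.2 • vecMulVec (Pi.single ij.1 (1 : ℝ) - Pi.single ij.2 1)
        (Pi.single ij.1 (1 : ℝ) - Pi.single ij.2 1)
    else 0
  map_add' c d := by
    rw [← sum_add_distrib]
    exact sum_congr rfl fun ij _ => by split_ifs <;> simp [add_smul]
  map_smul' a c := by
    simp only [smul_sum, Pi.smul_apply, smul_eq_mul, mul_smul, RingHom.id_apply, smul_ite,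
      smul_zero]

theorem weightedLaplacian_apply (c : ι → ι → ℝ) :
    weightedLaplacian c = ∑ ij : ι × ι,
      if ij.2 < ij.1 then
        c ij.1 ij.2 • vecMulVec (Pi.single ij.1 (1 : ℝ) - Pi.single ij.2 1)
          (Pi.single ij.1 (1 : ℝ) - Pi.single ij.2 1)
      else 0 :=
  rfl

theorem weightedLaplacian_mono {c d : ι → ι → ℝ} (h : ∀ i j, j < i → c i j ≤ d i j) :
    weightedLaplacian c ≤ weightedLaplacian d := by
  simp only [weightedLaplacian_apply]
  refine sum_le_sum fun ij _ => ?_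
  split_ifs with hij
  · exact smul_le_smul_of_nonneg_right (h _ _ hij) (vecMulVec_self_nonneg _)
  · exact le_rfl

theorem weightedLaplacian_nonneg {c : ι → ι → ℝ} (h : ∀ i j, 0 ≤ c i j) :
    0 ≤ weightedLaplacian c := by
  rw [← map_zero weightedLaplacian]
  exact weightedLaplacian_mono fun i j _ => h i j

theorem isHermitian_weightedLaplacian (c : ι → ι → ℝ) : (weightedLaplacian c).IsHermitian := by
  rw [weightedLaplacian_apply]
  refine isSelfAdjoint_sum _ fun ij _ => ?_
  split_ifs
  · exact .smul (.all (c ij.1 ij.2)) (vecMulVec_self_nonneg _).isSelfAdjoint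
  · exact .zero _

theorem sum_ite_lt_eq_half_sum {f : ι → ι → ℝ} (hsymm : ∀ i j, f i j = f j i)
    (hdiag : ∀ i, f i i = 0) :
    ∑ ij : ι × ι, (if ij.2 < ij.1 then f ij.1 ij.2 else 0) = (∑ i, ∑ j, f i j) / 2 := by
  have hswap : ∑ ij : ι × ι, (if ij.2 < ij.1 then f ij.1 ij.2 else 0) =
      ∑ ij : ι × ι, if ij.1 < ij.2 then f ij.1 ij.2 else 0 :=
    Fintype.sum_equiv (Equiv.prodComm ι ι) _ _ fun ij => by rw [hsymm]; rfl
  have hsplit : ∑ i, ∑ j, f i j =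
      ∑ ij : ι × ι, (if ij.2 < ij.1 then f ij.1 ij.2 else 0) +
        ∑ ij : ι × ι, if ij.1 < ij.2 then f ij.1 ij.2 else 0 := by
    rw [← sum_add_distrib, ← Fintype.sum_prod_type']
    refine sum_congr rfl fun ij _ => ?_
    rcases lt_trichotomy ij.1 ij.2 with h | h | h
    · simp [h, h.le]
    · simp [h, hdiag]
    · simp [h, h.le]
  linarith

theorem dotProduct_weightedLaplacian_mulVec {c : ι → ι → ℝ} (hc : ∀ i j, c i j = c j i)
    (v : ι → ℝ) :
    v ⬝ᵥ (weightedLaplacian c *ᵥ v) = (∑ i, ∑ j, c i j * (v i - v j) ^ 2) / 2 := by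
  rw [← sum_ite_lt_eq_half_sum (fun i j => by rw [hc]; ring) (fun i => by ring),
    weightedLaplacian_apply, sum_mulVec, dotProduct_sum]
  refine sum_congr rfl fun ij _ => ?_
  split_ifs
  · simp [smul_mulVec, dotProduct_smul, vecMulVec_mulVec, dotProduct_sub, sub_dotProduct, pow_two]
  · simp

theorem weightedLaplacian_one_add_vecMulVec_one :
    weightedLaplacian 1 + vecMulVec 1 1 = (Fintype.card ι : ℝ) • (1 : Matrix ι ι ℝ) := by
  have hform (v : ι → ℝ) : v ⬝ᵥ ((weightedLaplacian 1 + vecMulVec 1 1) *ᵥ v) =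
      v ⬝ᵥ (((Fintype.card ι : ℝ) • (1 : Matrix ι ι ℝ)) *ᵥ v) := by
    rw [add_mulVec, dotProduct_add, dotProduct_weightedLaplacian_mulVec (fun _ _ => rfl),
      dotProduct_vecMulVec_one_mulVec, dotProduct_smul_one_mulVec]
    simp only [Pi.one_apply, one_mul, sub_sq, sum_add_distrib, sum_sub_distrib, sum_const,
      card_univ, nsmul_eq_mul, ← mul_sum, ← sum_mul]
    ring
  have hleft : (weightedLaplacian 1 + vecMulVec 1 1 : Matrix ι ι ℝ).IsHermitian :=
    (isHermitian_weightedLaplacian 1).add (vecMulVec_self_nonneg 1).isSelfAdjoint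
  have hright : ((Fintype.card ι : ℝ) • (1 : Matrix ι ι ℝ)).IsHermitian :=
    isHermitian_one.smul (.all _)
  exact le_antisymm
    ((le_iff_forall_dotProduct_mulVec_le hleft hright).mpr fun v => (hform v).le)
    ((le_iff_forall_dotProduct_mulVec_le hright hleft).mpr fun v => (hform v).ge)

theorem weightedLaplacian_le_of_sum_le {c : ι → ι → ℝ} (hc0 : ∀ i j, 0 ≤ c i j)
    (hc : ∀ i j, c i j = c j i) {D : ℝ} (hD : ∀ i, ∑ j, c i j ≤ D) :
    weightedLaplacian c ≤ (2 * D) • 1 := by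
  rw [le_iff_forall_dotProduct_mulVec_le (isHermitian_weightedLaplacian c)
    (isHermitian_one.smul (.all _))]
  intro v
  rw [dotProduct_weightedLaplacian_mulVec hc, dotProduct_smul_one_mulVec]
  have hparallelogram : ∑ i, ∑ j, c i j * (v i - v j) ^ 2 ≤
      ∑ i, ∑ j, (2 * (c i j * v i ^ 2) + 2 * (c i j * v j ^ 2)) :=
    sum_le_sum fun i _ => sum_le_sum fun j _ => by
      nlinarith [mul_nonneg (hc0 i j) (sq_nonneg (v i + v j))]
  have hrow : ∑ i, ∑ j, c i j * v i ^ 2 ≤ D * ∑ i, v i ^ 2 := by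
    rw [mul_sum]
    exact sum_le_sum fun i _ => by rw [← sum_mul]; gcongr; exact hD i
  have hcol : ∑ i, ∑ j, c i j * v j ^ 2 = ∑ i, ∑ j, c i j * v i ^ 2 := by
    rw [sum_comm]
    exact sum_congr rfl fun i _ => sum_congr rfl fun j _ => by rw [hc]
  simp only [sum_add_distrib, ← mul_sum] at hparallelogram
  linarith

end WeightedLaplacian

section ItemLaplacian

open scoped MatrixOrder ComplexOrder

variable {n m : ℕ}

/-- The edge weights of a single user: `1` for the discordant pairs of the pairing `r` under the
responses `x`, and `0` otherwise. -/
def discordance (x : Fin m → Bool) (r : Fin m → Fin m → Bool) (i j : Fin m) : ℝ :=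
  if (r i j && (x i != x j)) = true then 1 else 0

theorem discordance_nonneg (x : Fin m → Bool) (r : Fin m → Fin m → Bool) (i j : Fin m) :
    0 ≤ discordance x r i j := by
  unfold discordance; positivity

theorem IsPairing.discordance_comm {s : Finset (Fin m)} {r : Fin m → Fin m → Bool}
    (hr : IsPairing s r) (x : Fin m → Bool) (i j : Fin m) :
    discordance x r i j = discordance x r j i := by
  unfold discordance
  rw [hr.1 i j, bne_comm]

theorem IsPairing.sum_discordance_le {s : Finset (Fin m)} {r : Fin m → Fin m → Bool}
    (hr : IsPairing s r) (x : Fin m → Bool) (i : Fin m) :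
    ∑ j, discordance x r i j ≤ if i ∈ s then 1 else 0 := by
  split_ifs with hi
  · have hcard : #{j | (r i j && (x i != x j)) = true} ≤ 1 := by
      refine card_le_one.mpr fun j hj k hk => ?_
      simp only [mem_filter, mem_univ, true_and, Bool.and_eq_true] at hj hk
      exact hr.2.2.2.1 i j k hj.1 hk.1
    simpa [discordance] using hcard
  · have hzero (j : Fin m) : discordance x r i j = 0 :=
      if_neg fun h => hi (hr.2.2.1 i j (Bool.and_eq_true_iff.mp h).1).1
    simp [hzero]

theorem IsPairing.weightedLaplacian_discordance_le {s : Finset (Fin m)}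
    {r : Fin m → Fin m → Bool} (hr : IsPairing s r) (x : Fin m → Bool) :
    weightedLaplacian (discordance x r) ≤ (2 : ℝ) • 1 := by
  simpa using weightedLaplacian_le_of_sum_le (discordance_nonneg x r) (hr.discordance_comm x)
    fun i => (hr.sum_discordance_le x i).trans (ite_le_one le_rfl zero_le_one)

theorem lapL_eq_weightedLaplacian (ℓ : Fin n → Fin m → Fin m → Bool) :
    lapL ℓ = weightedLaplacian fun i j => (Lcount ℓ i j : ℝ) :=
  rfl

theorem lapLz_eq_weightedLaplacian (θ : Fin m → ℝ) (ℓ : Fin n → Fin m → Fin m → Bool) :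
    lapLz θ ℓ = weightedLaplacian fun i j => (Lcount ℓ i j : ℝ) * z θ i j :=
  rfl

theorem lapL_disc (x : Fin n → Fin m → Bool) (r : Fin n → Fin m → Fin m → Bool) :
    lapL (disc x r) = ∑ t, weightedLaplacian (discordance (x t) (r t)) := by
  rw [lapL_eq_weightedLaplacian, ← map_sum]
  congr with i j
  simp [Lcount, disc, discordance]

theorem z_le_quarter (θ : Fin m → ℝ) (i j : Fin m) : z θ i j ≤ 1 / 4 := by
  rw [z, div_le_div_iff₀ (by positivity) (by norm_num)]
  nlinarith [sq_nonneg (Real.exp (θ i) - Real.exp (θ j))]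

theorem exp_le_mul_exp_of_abs_sub_le_log {a b κ : ℝ} (hκ : 0 < κ) (h : |a - b| ≤ Real.log κ) :
    Real.exp a ≤ κ * Real.exp b :=
  calc
    Real.exp a ≤ Real.exp (Real.log κ + b) := by gcongr; linarith [le_of_abs_le h]
    _ = κ * Real.exp b := by rw [Real.exp_add, Real.exp_log hκ]

theorem one_div_four_mul_le_z {θ : Fin m → ℝ} {κ : ℝ} (hκ : 1 ≤ κ) {i j : Fin m}
    (h : |θ i - θ j| ≤ Real.log κ) : 1 / (4 * κ) ≤ z θ i j := by
  have hi := Real.exp_pos (θ i)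
  have hj := Real.exp_pos (θ j)
  have hij := exp_le_mul_exp_of_abs_sub_le_log (by positivity) h
  have hji := exp_le_mul_exp_of_abs_sub_le_log (by positivity) (abs_sub_comm (θ i) (θ j) ▸ h)
  rw [z, div_le_div_iff₀ (by positivity) (by positivity)]
  nlinarith [mul_le_mul_of_nonneg_left hij hi.le, mul_le_mul_of_nonneg_left hji hj.le,
    mul_le_mul_of_nonneg_right hκ (mul_pos hi hj).le]

theorem lapLz_le_smul_lapL (θ : Fin m → ℝ) (ℓ : Fin n → Fin m → Fin m → Bool) :
    lapLz θ ℓ ≤ (1 / 4 : ℝ) • lapL ℓ := by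
  rw [lapLz_eq_weightedLaplacian, lapL_eq_weightedLaplacian, ← map_smul]
  refine weightedLaplacian_mono fun i j _ => ?_
  rw [Pi.smul_apply, Pi.smul_apply, smul_eq_mul, mul_comm]
  gcongr
  exact z_le_quarter θ i j

theorem smul_lapL_le_lapLz {θ : Fin m → ℝ} {κ : ℝ} (hκ : 1 ≤ κ)
    (h : ∀ i j, |θ i - θ j| ≤ Real.log κ) (ℓ : Fin n → Fin m → Fin m → Bool) :
    (1 / (4 * κ)) • lapL ℓ ≤ lapLz θ ℓ := by
  rw [lapLz_eq_weightedLaplacian, lapL_eq_weightedLaplacian, ← map_smul]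
  refine weightedLaplacian_mono fun i j _ => ?_
  rw [Pi.smul_apply, Pi.smul_apply, smul_eq_mul, mul_comm]
  gcongr
  exact one_div_four_mul_le_z hκ (h i j)

end ItemLaplacian

section Bernoulli

variable {ι : Type*} [Fintype ι] {Q : ι → ℝ}

/-- The probability of the outcome `x` under independent Bernoulli variables with success
probabilities `Q`. -/
def bernoulliWeight (Q : ι → ℝ) (x : ι → Bool) : ℝ :=
  ∏ i, if x i then Q i else 1 - Q i

theorem bernoulliWeight_nonneg (hQ : ∀ i, Q i ∈ Set.Icc 0 1) (x : ι → Bool) :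
    0 ≤ bernoulliWeight Q x := by
  refine prod_nonneg fun i _ => ?_
  split_ifs
  · exact (hQ i).1
  · exact sub_nonneg.mpr (hQ i).2

variable [DecidableEq ι]

theorem sum_bernoulliWeight_mul_prod_sign (Q : ι → ℝ) (s : Finset ι) :
    ∑ x, bernoulliWeight Q x * ∏ i ∈ s, (if x i then -1 else 1) = ∏ i ∈ s, (1 - 2 * Q i) := by
  have hprod := prod_univ_sum (fun _ : ι => (univ : Finset Bool)) fun i b =>
    (if b then Q i else 1 - Q i) * if i ∈ s then (if b then -1 else 1) else 1
  simp only [Fintype.piFinset_univ, prod_mul_distrib, Fintype.sum_bool, prod_ite_mem,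
    univ_inter, if_true, Bool.false_eq_true, if_false] at hprod
  have hmem : ∏ i ∈ s, (1 - 2 * Q i) = ∏ i, if i ∈ s then 1 - 2 * Q i else 1 := by simp
  rw [hmem]
  refine hprod.symm.trans (prod_congr rfl fun i _ => ?_)
  split_ifs <;> ring

theorem sum_bernoulliWeight (Q : ι → ℝ) : ∑ x, bernoulliWeight Q x = 1 := by
  simpa using sum_bernoulliWeight_mul_prod_sign Q ∅

theorem sum_bernoulliWeight_mul_ite (Q : ι → ℝ) (i : ι) :
    ∑ x, bernoulliWeight Q x * (if x i then 1 else 0) = Q i := by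
  have hsign (x : ι → Bool) : bernoulliWeight Q x * (if x i then 1 else 0) =
      (bernoulliWeight Q x - bernoulliWeight Q x * ∏ k ∈ {i}, (if x k then -1 else 1)) / 2 := by
    rw [prod_singleton]
    split_ifs <;> ring
  simp only [hsign, ← sum_div, sum_sub_distrib, sum_bernoulliWeight,
    sum_bernoulliWeight_mul_prod_sign]
  rw [prod_singleton]
  ring

theorem sum_bernoulliWeight_mul_ite_bne (Q : ι → ℝ) {i j : ι} (hij : i ≠ j) :
    ∑ x, bernoulliWeight Q x * (if (x i != x j) = true then 1 else 0) =
      Q i * (1 - Q j) + (1 - Q i) * Q j := by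
  have hsign (x : ι → Bool) : bernoulliWeight Q x * (if (x i != x j) = true then 1 else 0) =
      (bernoulliWeight Q x - bernoulliWeight Q x * ∏ k ∈ {i, j}, (if x k then -1 else 1)) / 2 := by
    rw [prod_pair hij]
    cases x i <;> cases x j <;> simp
  simp only [hsign, ← sum_div, sum_sub_distrib, sum_bernoulliWeight,
    sum_bernoulliWeight_mul_prod_sign]
  rw [prod_pair hij]
  ring

theorem le_sum_bernoulliWeight_mul_ite_bne {ε : ℝ} (hε : 0 ≤ ε)
    (hQ : ∀ i, Q i ∈ Set.Icc ε (1 - ε)) {i j : ι} (hij : i ≠ j) :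
    ε ≤ ∑ x, bernoulliWeight Q x * (if (x i != x j) = true then 1 else 0) := by
  rw [sum_bernoulliWeight_mul_ite_bne Q hij]
  nlinarith [mul_nonneg (sub_nonneg.mpr (hQ i).1) (hε.trans (le_sub_comm.mp (hQ j).2)),
    mul_nonneg (sub_nonneg.mpr (le_sub_comm.mp (hQ i).2)) (hε.trans (hQ j).1)]

theorem two_mul_natCast_half (k : ℕ) : 2 * ((k / 2 : ℕ) : ℝ) = k - (1 - (-1) ^ k) / 2 := by
  rcases k.even_or_odd with hk | hk
  · have hhalf : (2 * (k / 2 : ℕ) : ℝ) = k := mod_cast Nat.two_mul_div_two_of_even hk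
    rw [hhalf, hk.neg_one_pow]
    ring
  · have hhalf : (2 * (k / 2 : ℕ) + 1 : ℝ) = k := mod_cast Nat.two_mul_div_two_add_one_of_odd hk
    rw [hk.neg_one_pow]
    linarith

theorem sum_bernoulliWeight_mul_two_mul_half_card (Q : ι → ℝ) :
    ∑ x, bernoulliWeight Q x * (2 * ((#{i | x i = true} / 2 : ℕ) : ℝ)) =
      ∑ i, Q i - (1 - ∏ i, (1 - 2 * Q i)) / 2 := by
  have hparity (x : ι → Bool) : bernoulliWeight Q x * (2 * ((#{i | x i = true} / 2 : ℕ) : ℝ)) =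
      ∑ i, bernoulliWeight Q x * (if x i then 1 else 0) -
        (bernoulliWeight Q x - bernoulliWeight Q x * ∏ i, (if x i then -1 else 1)) / 2 := by
    rw [two_mul_natCast_half, ← mul_sum, prod_ite, sum_boole]
    simp only [prod_const, one_pow]
    ring
  simp only [hparity, sum_sub_distrib, ← sum_div, sum_bernoulliWeight,
    sum_bernoulliWeight_mul_prod_sign]
  rw [sum_comm]
  simp only [sum_bernoulliWeight_mul_ite]

end Bernoulli

section Pairing

open scoped BigOperators

variable {m : ℕ} {s : Finset (Fin m)} {r : Fin m → Fin m → Bool}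

/-- The maximal disjoint pairings of `s`. -/
abbrev Pairing (s : Finset (Fin m)) : Type :=
  {r : Fin m → Fin m → Bool // IsPairing s r}

noncomputable instance (s : Finset (Fin m)) : Fintype (Pairing s) :=
  Fintype.ofFinite _

theorem exists_isPairing (s : Finset (Fin m)) : ∃ r, IsPairing s r := by
  let e : Fin (#s) ↪o Fin m := s.orderEmbOfFin rfl
  let fst (l : Fin (#s / 2)) : Fin m := e ⟨2 * l, by omega⟩
  let snd (l : Fin (#s / 2)) : Fin m := e ⟨2 * l + 1, by omega⟩
  have hlt (l) : fst l < snd l := e.lt_iff_lt.mpr (by simp)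
  have hfst {k l} (h : fst k = fst l) : k = l := by
    have := congrArg Fin.val (e.injective h); grind
  have hsnd {k l} (h : snd k = snd l) : k = l := by
    have := congrArg Fin.val (e.injective h); grind
  have hne (k l) (h : fst k = snd l) : False := by
    have := congrArg Fin.val (e.injective h); grind
  have hmem (k) : e k ∈ s := s.orderEmbOfFin_mem rfl k
  classical
  refine ⟨fun i j => decide (∃ l, (i = fst l ∧ j = snd l) ∨ (i = snd l ∧ j = fst l)),
    ?_, ?_, ?_, ?_, ?_⟩
  · grind
  · grind
  · grind
  · grind
  · have himage : ({ij : Fin m × Fin m | ij.1 < ij.2 ∧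
        decide (∃ l, (ij.1 = fst l ∧ ij.2 = snd l) ∨ (ij.1 = snd l ∧ ij.2 = fst l)) = true} :
          Finset _) = univ.image fun l => (fst l, snd l) := by
      ext ⟨i, j⟩
      simp only [mem_filter, mem_univ, true_and, decide_eq_true_eq, mem_image, Prod.mk.injEq]
      grind
    rw [himage, card_image_of_injective _ fun k l h => hfst (Prod.ext_iff.mp h).1, card_univ,
      Fintype.card_fin]

instance (s : Finset (Fin m)) : Nonempty (Pairing s) :=
  nonempty_subtype.mpr (exists_isPairing s)

theorem card_filter_lt_eq_half_sum (hsymm : ∀ i j, r i j = r j i) (hdiag : ∀ i, r i i = false) :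
    (#{ij : Fin m × Fin m | ij.1 < ij.2 ∧ r ij.1 ij.2 = true} : ℝ) =
      (∑ i, ∑ j, if r i j = true then 1 else 0) / 2 := by
  rw [← sum_ite_lt_eq_half_sum (fun i j => by rw [hsymm]) (fun i => by simp [hdiag]), card_filter]
  push_cast
  refine Fintype.sum_equiv (Equiv.prodComm _ _) _ _ fun ij => ?_
  rw [hsymm, ite_and]
  rfl

theorem IsPairing.sum_sum_ite (hr : IsPairing s r) :
    ∑ i, ∑ j, (if r i j = true then (1 : ℝ) else 0) = 2 * ((#s / 2 : ℕ) : ℝ) := by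
  have hcard := card_filter_lt_eq_half_sum hr.1 hr.2.1
  rw [hr.2.2.2.2] at hcard
  linarith

/-- The items observed by a user with sampling indicators `a`. -/
def items (a : Fin m → Bool) : Finset (Fin m) := {i | a i = true}

theorem card_items_comp (a : Fin m → Bool) (σ : Equiv.Perm (Fin m)) :
    #(items (a ∘ σ)) = #(items a) :=
  card_equiv σ fun i => by simp [items]

theorem IsPairing.comp_perm {a : Fin m → Bool} (hr : IsPairing (items a) r)
    (σ : Equiv.Perm (Fin m)) :
    IsPairing (items (a ∘ σ)) fun i j => r (σ i) (σ j) := by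
  refine ⟨fun i j => hr.1 _ _, fun i => hr.2.1 _, fun i j hij => ?_,
    fun i j k hj hk => σ.injective (hr.2.2.2.1 _ _ _ hj hk), ?_⟩
  · simpa [items] using hr.2.2.1 _ _ hij
  · have hcard := card_filter_lt_eq_half_sum (r := fun i j => r (σ i) (σ j))
      (fun i j => hr.1 _ _) (fun i => hr.2.1 _)
    have hsum : ∑ i, ∑ j, (if r (σ i) (σ j) = true then (1 : ℝ) else 0) =
        ∑ i, ∑ j, if r i j = true then 1 else 0 :=
      Fintype.sum_equiv σ _ _ fun i => Fintype.sum_equiv σ _ _ fun j => rfl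
    rw [hsum, hr.sum_sum_ite, mul_div_cancel_left₀ _ two_ne_zero] at hcard
    rw [card_items_comp]
    exact_mod_cast hcard

/-- Relabelling the items by `σ`, as a bijection between pairings. -/
def pairingPermEquiv (a : Fin m → Bool) (σ : Equiv.Perm (Fin m)) :
    Pairing (items a) ≃ Pairing (items (a ∘ σ)) where
  toFun r := ⟨_, r.2.comp_perm σ⟩
  invFun r := ⟨fun i j => r.1 (σ.symm i) (σ.symm j), by
    simpa [Function.comp_assoc] using r.2.comp_perm σ.symm⟩
  left_inv r := by simp
  right_inv r := by simp

/-- The probability that the pair `{i, j}` is selected when each item is observed with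
probability `p` and the observed items are paired uniformly at random. -/
noncomputable def pairProb (p : ℝ) (i j : Fin m) : ℝ :=
  ∑ a, bernoulliWeight (fun _ => p) a * 𝔼 r : Pairing (items a), if r.1 i j = true then 1 else 0

theorem pairProb_perm (p : ℝ) (i j : Fin m) (σ : Equiv.Perm (Fin m)) :
    pairProb p (σ i) (σ j) = pairProb p i j := by
  refine Fintype.sum_equiv (Equiv.arrowCongr σ.symm (Equiv.refl Bool)) _ _ fun a => ?_
  have hweight : bernoulliWeight (fun _ => p) (a ∘ σ) = bernoulliWeight (fun _ => p) a :=
    Equiv.prod_comp σ fun i => if a i then p else 1 - p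
  have hcomp : Equiv.arrowCongr σ.symm (Equiv.refl Bool) a = a ∘ σ := rfl
  rw [hcomp, hweight]
  congr 1
  exact Fintype.expect_equiv (pairingPermEquiv a σ) _ _ fun r => rfl

theorem pairProb_eq (p : ℝ) {i j k l : Fin m} (hij : i ≠ j) (hkl : k ≠ l) :
    pairProb p i j = pairProb p k l := by
  obtain ⟨σ, rfl, rfl⟩ := MulAction.is_two_pretransitive_iff.mp
    (Equiv.Perm.isMultiplyPretransitive (Fin m) 2) hij hkl
  exact (pairProb_perm p i j σ).symm

theorem pairProb_self (p : ℝ) (i : Fin m) : pairProb p i i = 0 := by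
  simp only [pairProb, fun s (r : Pairing s) => r.2.2.1 i]
  simp

theorem sum_sum_pairProb (p : ℝ) :
    ∑ i : Fin m, ∑ j, pairProb p i j = m * p - (1 - (1 - 2 * p) ^ m) / 2 := by
  have hcond (a : Fin m → Bool) :
      ∑ i, ∑ j, 𝔼 r : Pairing (items a), (if r.1 i j = true then (1 : ℝ) else 0) =
        2 * ((#(items a) / 2 : ℕ) : ℝ) := by
    simp only [← expect_sum_comm, fun r : Pairing (items a) => r.2.sum_sum_ite,
      Fintype.expect_const]
  calc
    _ = ∑ a : Fin m → Bool,
          bernoulliWeight (fun _ => p) a * (2 * ((#(items a) / 2 : ℕ) : ℝ)) := by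
      simp only [← hcond, mul_sum, pairProb]
      rw [sum_comm_cycle]
    _ = _ := by
      simpa [items] using sum_bernoulliWeight_mul_two_mul_half_card fun _ : Fin m => p

theorem mul_pairProb {p : ℝ} {i j : Fin m} (hij : i ≠ j) :
    m * (m - 1) * pairProb p i j = m * p - (1 - (1 - 2 * p) ^ m) / 2 := by
  have hconst (k l : Fin m) :
      pairProb p k l = pairProb p i j - if k = l then pairProb p i j else 0 := by
    split_ifs with hkl
    · rw [hkl, pairProb_self, sub_self]
    · rw [pairProb_eq p hkl hij, sub_zero]
  rw [← sum_sum_pairProb, Fintype.sum_congr _ _ fun k => Fintype.sum_congr _ _ (hconst k)]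
  simp only [sum_sub_distrib, sum_ite_eq, mem_univ, if_true, sum_const, card_univ,
    Fintype.card_fin, nsmul_eq_mul]
  ring

theorem two_thirds_mul_le {p : ℝ} (hp1 : p ≤ 1) (hmp : 2 ≤ m * p) :
    2 / 3 * p * (m - 1) ≤ m * p - (1 - (1 - 2 * p) ^ m) / 2 := by
  have hp0 : 0 < p := pos_of_mul_pos_right (by linarith) m.cast_nonneg
  rcases le_or_gt p (1 / 2) with hp | hp
  · have hpow : 0 ≤ (1 - 2 * p) ^ m := pow_nonneg (by linarith) m
    nlinarith
  · have hpow : -1 ≤ (1 - 2 * p) ^ m :=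
      neg_le_of_abs_le (abs_pow (1 - 2 * p) m ▸
        pow_le_one₀ (abs_nonneg _) (abs_le.mpr ⟨by linarith, by linarith⟩))
    rcases le_or_gt m 3 with hm | hm
    · have : (m : ℝ) ≤ 3 := mod_cast hm
      nlinarith
    · have : (4 : ℝ) ≤ m := mod_cast hm
      nlinarith

theorem two_thirds_mul_le_mul_pairProb {p : ℝ} (hp1 : p ≤ 1) (hmp : 2 ≤ m * p) {i j : Fin m}
    (hij : i ≠ j) : 2 / 3 * p ≤ m * pairProb p i j := by
  have hm : (0 : ℝ) < m - 1 := by nlinarith [(Nat.cast_nonneg m : (0 : ℝ) ≤ m)]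
  have hprob := two_thirds_mul_le hp1 hmp
  rw [← mul_pairProb hij] at hprob
  exact le_of_mul_le_mul_right (by linarith) hm

end Pairing

section RayleighBounds

open scoped MatrixOrder ComplexOrder

variable {m : ℕ}

/-- The bounds `a ≤ λ_{m-1}(L)` and `λ₁(L) ≤ b` for a positive semidefinite matrix `L` annihilating
the all-ones vector, expressed through its Rayleigh quotients. -/
def HasRayleighBounds (L : Matrix (Fin m) (Fin m) ℝ) (a b : ℝ) : Prop :=
  (∀ v : Fin m → ℝ, ∑ i, v i = 0 → a * ∑ i, v i ^ 2 ≤ v ⬝ᵥ (L *ᵥ v)) ∧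
    ∀ v : Fin m → ℝ, v ⬝ᵥ (L *ᵥ v) ≤ b * ∑ i, v i ^ 2

theorem HasRayleighBounds.mono {L : Matrix (Fin m) (Fin m) ℝ} {a b a' b' : ℝ}
    (h : HasRayleighBounds L a b) (ha : a' ≤ a) (hb : b ≤ b') : HasRayleighBounds L a' b' :=
  ⟨fun v hv => le_trans (by gcongr) (h.1 v hv), fun v => (h.2 v).trans (by gcongr)⟩

theorem hasRayleighBounds_of_loewner_le {L : Matrix (Fin m) (Fin m) ℝ} {a b c : ℝ}
    (ha : a • 1 ≤ L + c • vecMulVec 1 1) (hb : L ≤ b • 1) : HasRayleighBounds L a b := by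
  refine ⟨fun v hv => ?_, fun v => ?_⟩
  · have h := dotProduct_mulVec_le_of_le ha v
    rw [dotProduct_smul_one_mulVec, add_mulVec, dotProduct_add, smul_mulVec, dotProduct_smul,
      dotProduct_vecMulVec_one_mulVec, hv] at h
    simpa using h
  · exact (dotProduct_mulVec_le_of_le hb v).trans_eq (dotProduct_smul_one_mulVec b v)

theorem HasRayleighBounds.lapLz {n : ℕ} {ℓ : Fin n → Fin m → Fin m → Bool} {a b κ : ℝ}
    (h : HasRayleighBounds (lapL ℓ) a b) {θ : Fin m → ℝ} (hκ : 1 ≤ κ)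
    (hθ : ∀ i j, |θ i - θ j| ≤ Real.log κ) :
    HasRayleighBounds (lapLz θ ℓ) (1 / (4 * κ) * a) (1 / 4 * b) := by
  refine ⟨fun v hv => ?_, fun v => ?_⟩
  · calc 1 / (4 * κ) * a * ∑ i, v i ^ 2 ≤ 1 / (4 * κ) * (v ⬝ᵥ (lapL ℓ *ᵥ v)) := by
          rw [mul_assoc]
          gcongr
          exact h.1 v hv
      _ ≤ v ⬝ᵥ (RaschRP.lapLz θ ℓ *ᵥ v) := by
          simpa [smul_mulVec, dotProduct_smul] using
            dotProduct_mulVec_le_of_le (smul_lapL_le_lapLz hκ hθ ℓ) v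
  · calc v ⬝ᵥ (RaschRP.lapLz θ ℓ *ᵥ v) ≤ 1 / 4 * (v ⬝ᵥ (lapL ℓ *ᵥ v)) := by
          simpa [smul_mulVec, dotProduct_smul] using
            dotProduct_mulVec_le_of_le (lapLz_le_smul_lapL θ ℓ) v
      _ ≤ 1 / 4 * b * ∑ i, v i ^ 2 := by
          rw [mul_assoc]
          gcongr
          exact h.2 v

end RayleighBounds

section UserLaw

open scoped MatrixOrder ComplexOrder BigOperators

variable {n m : ℕ} {p ε : ℝ} {Q : Fin m → ℝ}

/-- The data of a single user: the sampling indicators, the pairing of the observed items, and the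
responses. -/
abbrev UserData (m : ℕ) : Type :=
  (a : Fin m → Bool) × Pairing (items a) × (Fin m → Bool)

/-- The law of the data of a user who observes each item with probability `p` and responds `1` to
item `i` with probability `Q i`. -/
noncomputable def userWeight (p : ℝ) (Q : Fin m → ℝ) (u : UserData m) : ℝ :=
  bernoulliWeight (fun _ => p) u.1 * bernoulliWeight Q u.2.2 *
    (pairingCount (items u.1) : ℝ)⁻¹

theorem userWeight_nonneg (hp : p ∈ Set.Icc 0 1) (hQ : ∀ i, Q i ∈ Set.Icc 0 1) (u : UserData m) :
    0 ≤ userWeight p Q u :=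
  mul_nonneg (mul_nonneg (bernoulliWeight_nonneg (fun _ => hp) _) (bernoulliWeight_nonneg hQ _))
    (by positivity)

theorem sum_userWeight_mul (p : ℝ) (Q : Fin m → ℝ) (f : (a : Fin m → Bool) → Pairing (items a) → ℝ)
    (g : (Fin m → Bool) → ℝ) :
    ∑ u : UserData m, userWeight p Q u * (f u.1 u.2.1 * g u.2.2) =
      (∑ a, bernoulliWeight (fun _ => p) a * 𝔼 r, f a r) * ∑ x, bernoulliWeight Q x * g x := by
  rw [Fintype.sum_sigma, sum_mul]
  refine sum_congr rfl fun a _ => ?_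
  have hterm (r : Pairing (items a)) (x : Fin m → Bool) :
      userWeight p Q ⟨a, r, x⟩ * (f a r * g x) =
        bernoulliWeight (fun _ => p) a * (Fintype.card (Pairing (items a)) : ℝ)⁻¹ *
          (f a r * (bernoulliWeight Q x * g x)) := by
    simp only [userWeight, pairingCount, Nat.card_eq_fintype_card]
    ring
  simp only [Fintype.sum_prod_type, hterm, ← mul_sum, ← sum_mul, Fintype.expect_eq_sum_div_card]
  ring

theorem sum_userWeight (p : ℝ) (Q : Fin m → ℝ) : ∑ u, userWeight p Q u = 1 := by
  simpa [sum_bernoulliWeight] using sum_userWeight_mul p Q (fun _ _ => 1) fun _ => 1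

/-- The Laplacian of the effective comparisons contributed by a single user. -/
noncomputable def userLaplacian (u : UserData m) : Matrix (Fin m) (Fin m) ℝ :=
  weightedLaplacian (discordance u.2.2 u.2.1.1)

theorem userLaplacian_nonneg (u : UserData m) : 0 ≤ userLaplacian u :=
  weightedLaplacian_nonneg (discordance_nonneg _ _)

theorem userLaplacian_le_two_smul_one (u : UserData m) : userLaplacian u ≤ (2 : ℝ) • 1 :=
  u.2.1.2.weightedLaplacian_discordance_le _

/-- The expected edge weights of the Laplacian of a single user. -/
noncomputable def meanDiscordance (p : ℝ) (Q : Fin m → ℝ) (i j : Fin m) : ℝ :=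
  ∑ u : UserData m, userWeight p Q u * discordance u.2.2 u.2.1.1 i j

theorem sum_userWeight_smul_userLaplacian (p : ℝ) (Q : Fin m → ℝ) :
    ∑ u, userWeight p Q u • userLaplacian u = weightedLaplacian (meanDiscordance p Q) := by
  simp only [userLaplacian, ← map_smul, ← map_sum]
  congr with i j
  simp [meanDiscordance]

theorem meanDiscordance_eq (p : ℝ) (Q : Fin m → ℝ) (i j : Fin m) :
    meanDiscordance p Q i j = pairProb p i j *
      ∑ x, bernoulliWeight Q x * if (x i != x j) = true then 1 else 0 := by
  rw [pairProb, ← sum_userWeight_mul]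
  refine sum_congr rfl fun u _ => ?_
  simp only [discordance, Bool.and_eq_true, ite_and, mul_ite, mul_one, mul_zero]
  split_ifs <;> rfl

theorem sum_meanDiscordance_le (hp : p ∈ Set.Icc 0 1) (hQ : ∀ i, Q i ∈ Set.Icc 0 1) (i : Fin m) :
    ∑ j, meanDiscordance p Q i j ≤ p :=
  calc
    _ = ∑ u : UserData m, userWeight p Q u * ∑ j, discordance u.2.2 u.2.1.1 i j := by
      simp only [meanDiscordance, mul_sum]
      exact sum_comm
    _ ≤ ∑ u : UserData m, userWeight p Q u * ((if u.1 i then 1 else 0) * 1) := by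
      refine sum_le_sum fun u _ => mul_le_mul_of_nonneg_left ?_ (userWeight_nonneg hp hQ u)
      simpa [items] using u.2.1.2.sum_discordance_le u.2.2 i
    _ = p := by
      rw [sum_userWeight_mul p Q (fun a _ => if a i then 1 else 0) fun _ => 1]
      simp [sum_bernoulliWeight, sum_bernoulliWeight_mul_ite, -mul_ite]

theorem sum_userWeight_smul_userLaplacian_le (hp : p ∈ Set.Icc 0 1)
    (hQ : ∀ i, Q i ∈ Set.Icc 0 1) :
    ∑ u, userWeight p Q u • userLaplacian u ≤ (2 * p) • 1 := by
  rw [sum_userWeight_smul_userLaplacian]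
  refine weightedLaplacian_le_of_sum_le (fun i j => ?_) (fun i j => ?_)
    (sum_meanDiscordance_le hp hQ)
  · exact sum_nonneg fun u _ => mul_nonneg (userWeight_nonneg hp hQ u) (discordance_nonneg _ _ i j)
  · exact sum_congr rfl fun u _ => by rw [u.2.1.2.discordance_comm]

theorem smul_one_le_sum_userWeight_smul_userLaplacian_add (hp1 : p ≤ 1) (hmp : 2 ≤ m * p)
    (hε : 0 ≤ ε) (hQ : ∀ i, Q i ∈ Set.Icc ε (1 - ε)) :
    (2 / 3 * p * ε) • (1 : Matrix (Fin m) (Fin m) ℝ) ≤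
      ∑ u, userWeight p Q u • userLaplacian u + (2 / 3 * p * ε / m) • vecMulVec 1 1 := by
  have hm : (m : ℝ) ≠ 0 := by rintro h; norm_num [h] at hmp
  have hone : (2 / 3 * p * ε) • (1 : Matrix (Fin m) (Fin m) ℝ) =
      weightedLaplacian ((2 / 3 * p * ε / m) • 1) + (2 / 3 * p * ε / m) • vecMulVec 1 1 := by
    rw [map_smul, ← smul_add, weightedLaplacian_one_add_vecMulVec_one, smul_smul,
      Fintype.card_fin, div_mul_cancel₀ _ hm]
  rw [hone, sum_userWeight_smul_userLaplacian]
  gcongr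
  refine weightedLaplacian_mono fun i j hji => ?_
  have hpair := two_thirds_mul_le_mul_pairProb hp1 hmp hji.ne'
  have hp0 : 0 ≤ p := (pos_of_mul_pos_right (by linarith) m.cast_nonneg).le
  rw [meanDiscordance_eq, Pi.smul_apply, Pi.smul_apply, Pi.one_apply, Pi.one_apply, smul_eq_mul,
    mul_one, div_le_iff₀' (by positivity), ← mul_assoc]
  exact mul_le_mul hpair (le_sum_bernoulliWeight_mul_ite_bne hε hQ hji.ne') hε
    ((by positivity : 0 ≤ 2 / 3 * p).trans hpair)

end UserLaw

section SpectralConcentration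

open scoped MatrixOrder ComplexOrder

variable {n m : ℕ} {p ε : ℝ} {Q : Fin n → Fin m → ℝ}

theorem smul_vecMulVec_one_le {a : ℝ} (ha : 0 ≤ a) :
    (a / m) • (vecMulVec 1 1 : Matrix (Fin m) (Fin m) ℝ) ≤ a • 1 := by
  rcases m.eq_zero_or_pos with rfl | hm
  · exact (Subsingleton.elim _ _).le
  calc (a / m) • (vecMulVec 1 1 : Matrix (Fin m) (Fin m) ℝ)
      ≤ (a / m) • (weightedLaplacian 1 + vecMulVec 1 1) := by
        gcongr
        exact le_add_of_nonneg_left (weightedLaplacian_nonneg fun _ _ => zero_le_one)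
    _ = a • 1 := by
        rw [weightedLaplacian_one_add_vecMulVec_one, smul_smul, Fintype.card_fin,
          div_mul_cancel₀ _ (by positivity)]

/-- The Laplacian of a single user, made nondegenerate along the all-ones vector in its kernel and
scaled so that `shiftedLaplacian a u ≤ 1` for `a ∈ [0, 1]`. -/
noncomputable def shiftedLaplacian (a : ℝ) (u : UserData m) : Matrix (Fin m) (Fin m) ℝ :=
  (1 / 3 : ℝ) • (userLaplacian u + (a / m) • vecMulVec 1 1)

theorem shiftedLaplacian_nonneg {a : ℝ} (ha : 0 ≤ a) (u : UserData m) :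
    0 ≤ shiftedLaplacian a u := by
  refine smul_nonneg (by norm_num) (add_nonneg (userLaplacian_nonneg u) ?_)
  exact smul_nonneg (by positivity) (vecMulVec_self_nonneg 1)

theorem shiftedLaplacian_le_one {a : ℝ} (ha : a ∈ Set.Icc 0 1) (u : UserData m) :
    shiftedLaplacian a u ≤ 1 :=
  calc shiftedLaplacian a u ≤ (1 / 3 : ℝ) • ((2 : ℝ) • 1 + (1 : ℝ) • 1) := by
        refine smul_le_smul_of_nonneg_left (add_le_add (userLaplacian_le_two_smul_one u) ?_)
          (by norm_num)
        exact (smul_vecMulVec_one_le ha.1).trans (smul_le_smul_of_nonneg_right ha.2 zero_le_one)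
    _ = 1 := by rw [← add_smul, smul_smul]; norm_num

theorem smul_one_le_sum_userWeight_smul_shiftedLaplacian {Q : Fin m → ℝ} (hp1 : p ≤ 1)
    (hmp : 2 ≤ m * p) (hε : 0 ≤ ε) (hQ : ∀ i, Q i ∈ Set.Icc ε (1 - ε)) :
    (2 / 3 * p * ε / 3) • 1 ≤ ∑ u, userWeight p Q u • shiftedLaplacian (2 / 3 * p * ε) u :=
  calc (2 / 3 * p * ε / 3) • 1 = (1 / 3 : ℝ) • (2 / 3 * p * ε) • 1 := by
        rw [smul_smul, one_div_mul_eq_div]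
    _ ≤ (1 / 3 : ℝ) •
        (∑ u, userWeight p Q u • userLaplacian u + (2 / 3 * p * ε / m) • vecMulVec 1 1) := by
      gcongr
      exact smul_one_le_sum_userWeight_smul_userLaplacian_add hp1 hmp hε hQ
    _ = ∑ u, userWeight p Q u • shiftedLaplacian (2 / 3 * p * ε) u := by
      simp only [shiftedLaplacian, smul_comm _ (1 / 3 : ℝ), ← smul_sum, smul_add, sum_add_distrib,
        ← sum_smul, sum_userWeight, one_smul]

theorem sum_shiftedLaplacian (a : ℝ) (u : Fin n → UserData m) :
    ∑ t, shiftedLaplacian a (u t) =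
      (1 / 3 : ℝ) • (∑ t, userLaplacian (u t) + (n * (a / m)) • vecMulVec 1 1) := by
  simp only [shiftedLaplacian, ← smul_sum, sum_add_distrib, sum_const, card_univ, Fintype.card_fin,
    mul_comm (n : ℝ), mul_smul (a / m), Nat.cast_smul_eq_nsmul]

open scoped Classical in
theorem sum_prod_userWeight_filter_not_le_sum_le (hp1 : p ≤ 1) (hmp : 2 ≤ m * p)
    (hε : ε ∈ Set.Icc 0 1) (hQ : ∀ t i, Q t i ∈ Set.Icc ε (1 - ε)) :
    ∑ u : Fin n → UserData m with
        ¬(n * p * ε / 2) • 1 ≤ ∑ t, userLaplacian (u t) + (n * (2 / 3 * p * ε / m)) • vecMulVec 1 1,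
      ∏ t, userWeight p (Q t) (u t) ≤ m * Real.exp (-(n * p * ε / 144)) := by
  have hp0 : 0 ≤ p := (pos_of_mul_pos_right (by linarith) m.cast_nonneg).le
  have hε0 := hε.1
  set a := 2 / 3 * p * ε with ha
  have ha0 : 0 ≤ a := by positivity
  have ha1 : a ≤ 1 := by nlinarith [mul_le_one₀ hp1 hε.1 hε.2]
  have hQ01 (t : Fin n) (i : Fin m) : Q t i ∈ Set.Icc 0 1 :=
    Set.Icc_subset_Icc hε0 (by linarith) (hQ t i)
  have hevent (u : Fin n → UserData m) :
      ((1 - 1 / 4) * ∑ _ : Fin n, a / 3) • 1 ≤ ∑ t, shiftedLaplacian a (u t) ↔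
        (n * p * ε / 2) • 1 ≤ ∑ t, userLaplacian (u t) + (n * (a / m)) • vecMulVec 1 1 := by
    have hconst : (1 - 1 / 4) * ∑ _ : Fin n, a / 3 = 1 / 3 * (n * p * ε / 2) := by
      rw [sum_const, card_univ, Fintype.card_fin, nsmul_eq_mul]; ring
    rw [hconst, sum_shiftedLaplacian, mul_smul, smul_le_smul_iff_of_pos_left (by norm_num)]
  have h := sum_prod_filter_not_le_sum_le (X := fun _ => shiftedLaplacian a)
    (fun t => userWeight_nonneg ⟨hp0, hp1⟩ (hQ01 t)) (fun t => sum_userWeight p (Q t))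
    (fun _ => shiftedLaplacian_nonneg ha0) (fun _ => shiftedLaplacian_le_one ⟨ha0, ha1⟩)
    (fun _ => by positivity)
    (fun t => smul_one_le_sum_userWeight_smul_shiftedLaplacian hp1 hmp hε0 (hQ t))
    (δ := 1 / 4) (by norm_num)
  simp only [← ha, hevent] at h
  refine h.trans_eq ?_
  rw [sum_const, card_univ, Fintype.card_fin, Fintype.card_fin, nsmul_eq_mul]
  congr 2
  ring

open scoped Classical in
theorem sum_prod_userWeight_filter_not_sum_le (hp : p ∈ Set.Icc 0 1)
    (hQ : ∀ t i, Q t i ∈ Set.Icc 0 1) :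
    ∑ u : Fin n → UserData m with ¬∑ t, userLaplacian (u t) ≤ (3 * (n * p)) • 1,
      ∏ t, userWeight p (Q t) (u t) ≤ m * Real.exp (-(n * p / 16)) := by
  let X (u : UserData m) : Matrix (Fin m) (Fin m) ℝ := (1 / 2 : ℝ) • userLaplacian u
  have hX1 (u : UserData m) : X u ≤ 1 := by
    refine (smul_le_smul_of_nonneg_left (userLaplacian_le_two_smul_one u) (by norm_num)).trans_eq ?_
    rw [smul_smul]
    norm_num
  have hmean (t : Fin n) : ∑ u, userWeight p (Q t) u • X u ≤ p • 1 :=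
    calc ∑ u, userWeight p (Q t) u • X u
        = (1 / 2 : ℝ) • ∑ u, userWeight p (Q t) u • userLaplacian u := by
          simp only [X, smul_comm _ (1 / 2 : ℝ), ← smul_sum]
      _ ≤ (1 / 2 : ℝ) • (2 * p) • 1 := by
          gcongr
          exact sum_userWeight_smul_userLaplacian_le hp (hQ t)
      _ = p • 1 := by rw [smul_smul]; ring_nf
  have hevent (u : Fin n → UserData m) :
      ∑ t, X (u t) ≤ ((1 + 1 / 2) * ∑ _ : Fin n, p) • 1 ↔
        ∑ t, userLaplacian (u t) ≤ (3 * (n * p)) • 1 := by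
    have hconst : (1 + 1 / 2) * ∑ _ : Fin n, p = 1 / 2 * (3 * (n * p)) := by
      rw [sum_const, card_univ, Fintype.card_fin, nsmul_eq_mul]; ring
    rw [hconst, ← smul_sum, mul_smul, smul_le_smul_iff_of_pos_left (by norm_num)]
  have h := sum_prod_filter_not_sum_le_smul_le (X := fun _ => X)
    (fun t => userWeight_nonneg hp (hQ t)) (fun t => sum_userWeight p (Q t))
    (fun _ u => smul_nonneg (by norm_num) (userLaplacian_nonneg u)) (fun _ => hX1)
    (fun _ => hp.1) hmean (δ := 1 / 2) (by norm_num) (by norm_num)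
  simp only [hevent] at h
  refine h.trans_eq ?_
  rw [sum_const, card_univ, Fintype.card_fin, Fintype.card_fin, nsmul_eq_mul]
  congr 2
  ring

open scoped Classical in
theorem sum_prod_userWeight_filter_not_hasRayleighBounds_le (hp1 : p ≤ 1) (hmp : 2 ≤ m * p)
    (hε : ε ∈ Set.Icc 0 1) (hQ : ∀ t i, Q t i ∈ Set.Icc ε (1 - ε)) :
    ∑ u : Fin n → UserData m with
        ¬HasRayleighBounds (∑ t, userLaplacian (u t)) (n * p * ε / 2) (3 * (n * p)),
      ∏ t, userWeight p (Q t) (u t) ≤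
        m * Real.exp (-(n * p * ε / 144)) + m * Real.exp (-(n * p / 16)) := by
  have hp0 : 0 ≤ p := (pos_of_mul_pos_right (by linarith) m.cast_nonneg).le
  have hQ01 (t : Fin n) (i : Fin m) : Q t i ∈ Set.Icc 0 1 :=
    Set.Icc_subset_Icc hε.1 (by linarith [hε.1]) (hQ t i)
  have hnonneg (u : Fin n → UserData m) : 0 ≤ ∏ t, userWeight p (Q t) (u t) :=
    prod_nonneg fun t _ => userWeight_nonneg ⟨hp0, hp1⟩ (hQ01 t) (u t)
  refine le_trans ?_ (add_le_add (sum_prod_userWeight_filter_not_le_sum_le hp1 hmp hε hQ)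
    (sum_prod_userWeight_filter_not_sum_le ⟨hp0, hp1⟩ hQ01))
  rw [← sum_union_inter, ← filter_or]
  refine le_add_of_le_of_nonneg (sum_le_sum_of_subset_of_nonneg ?_ fun u _ _ => hnonneg u)
    (sum_nonneg fun u _ => hnonneg u)
  intro u hu
  simp only [mem_filter, mem_univ, true_and] at hu ⊢
  contrapose! hu
  exact hasRayleighBounds_of_loewner_le hu.1 hu.2

end SpectralConcentration

section Transfer

theorem measure_le_ofReal_sum_filter {Ω V : Type*} [MeasurableSpace Ω] [Fintype V]
    (P : Measure Ω) {Φ : Ω → V} {w : V → ℝ} (hw : ∀ u, 0 ≤ w u)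
    (hP : ∀ u, P {ω | Φ ω = u} ≤ ENNReal.ofReal (w u)) (S : V → Prop) [DecidablePred S] :
    P {ω | S (Φ ω)} ≤ ENNReal.ofReal (∑ u with S u, w u) := by
  have hcover : {ω | S (Φ ω)} ⊆ ⋃ u ∈ ({u | S u} : Finset V), {ω | Φ ω = u} := fun ω hω => by
    simpa using hω
  calc P {ω | S (Φ ω)} ≤ ∑ u with S u, P {ω | Φ ω = u} :=
        (measure_mono hcover).trans (measure_biUnion_finset_le _ _)
    _ ≤ ∑ u with S u, ENNReal.ofReal (w u) := sum_le_sum fun u _ => hP u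
    _ = _ := (ENNReal.ofReal_sum_of_nonneg fun u _ => hw u).symm

theorem ofReal_one_sub_le_of_measure_compl_le {Ω : Type*} [MeasurableSpace Ω] {P : Measure Ω}
    [IsProbabilityMeasure P] {G : Set Ω} {ε : ℝ} (hε : 0 ≤ ε) (h : P Gᶜ ≤ ENNReal.ofReal ε) :
    ENNReal.ofReal (1 - ε) ≤ P G := by
  rw [ENNReal.ofReal_sub _ hε, ENNReal.ofReal_one, tsub_le_iff_right]
  calc 1 = P (G ∪ Gᶜ) := by rw [Set.union_compl_self, measure_univ]
    _ ≤ P G + P Gᶜ := measure_union_le _ _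
    _ ≤ P G + ENNReal.ofReal ε := by gcongr

theorem mul_exp_neg_le_one_div_pow {n m k : ℕ} {α y : ℝ} (hn : n ≠ 0) (hm : (m : ℝ) ≤ n ^ α)
    (hy : (α + k) * Real.log n ≤ y) : m * Real.exp (-y) ≤ 1 / n ^ k := by
  have hn' : (0 : ℝ) < n := by positivity
  calc m * Real.exp (-y) ≤ n ^ α * n ^ (-(α + k)) := by
        gcongr
        rw [Real.rpow_def_of_pos hn']
        gcongr
        linarith
    _ = 1 / n ^ k := by
        rw [← Real.rpow_add hn', neg_add, add_neg_cancel_left, Real.rpow_neg hn'.le,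
          Real.rpow_natCast, one_div]

variable {n m : ℕ} {ζ : Fin n → ℝ} {θ : Fin m → ℝ} {κ : ℝ}

theorem q_mem_Icc (hκ : 1 ≤ κ) (h : ∀ t i, |ζ t - θ i| ≤ Real.log κ) (t : Fin n) (i : Fin m) :
    q ζ θ t i ∈ Set.Icc (1 / (2 * κ)) (1 - 1 / (2 * κ)) := by
  have hζ := Real.exp_pos (ζ t)
  have hθ := Real.exp_pos (θ i)
  have hζθ := exp_le_mul_exp_of_abs_sub_le_log (by positivity) (h t i)
  have hθζ := exp_le_mul_exp_of_abs_sub_le_log (by positivity) (abs_sub_comm (ζ t) (θ i) ▸ h t i)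
  have hcompl : 1 - q ζ θ t i = Real.exp (ζ t) / (Real.exp (ζ t) + Real.exp (θ i)) := by
    rw [q]; field_simp; ring
  refine ⟨?_, le_sub_comm.mp ?_⟩
  · rw [q, div_le_div_iff₀ (by positivity) (by positivity)]
    nlinarith
  · rw [hcompl, div_le_div_iff₀ (by positivity) (by positivity)]
    nlinarith

variable {Ω : Type*} [MeasurableSpace Ω] {P : Measure Ω} {p : ℝ}
  {A X : Ω → Fin n → Fin m → Bool} {R : Ω → Fin 1 → Fin n → Fin m → Fin m → Bool}

/-- The data of all users at a sample point. -/
def HasRaschLaw.userData (h : HasRaschLaw P p ζ θ A X R) (ω : Ω) (t : Fin n) : UserData m :=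
  ⟨A ω t, ⟨R ω 0 t, h.1 ω 0 t⟩, X ω t⟩

theorem HasRaschLaw.lapL_disc (h : HasRaschLaw P p ζ θ A X R) (ω : Ω) :
    lapL (disc (X ω) (R ω 0)) = ∑ t, userLaplacian (h.userData ω t) :=
  RaschRP.lapL_disc _ _

theorem HasRaschLaw.measure_userData_eq_le (h : HasRaschLaw P p ζ θ A X R)
    (u : Fin n → UserData m) :
    P {ω | h.userData ω = u} ≤ ENNReal.ofReal (∏ t, userWeight p (q ζ θ t) (u t)) := by
  have hsub : {ω | h.userData ω = u} ⊆ {ω | A ω = (fun t => (u t).1) ∧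
      X ω = (fun t => (u t).2.2) ∧ R ω = fun _ t => (u t).2.1.1} := by
    rintro ω rfl
    exact ⟨rfl, rfl, funext fun k => by rw [Subsingleton.elim k 0]; rfl⟩
  refine (measure_mono hsub).trans_eq ((h.2 _ _ _ fun _ t => (u t).2.1.2).trans ?_)
  simp only [userWeight, bernoulliWeight, prod_mul_distrib, univ_unique, prod_singleton]
  rfl

theorem HasRaschLaw.ofReal_le_measure_hasRayleighBounds [IsProbabilityMeasure P]
    (h : HasRaschLaw P p ζ θ A X R) (hp1 : p ≤ 1) (hmp : 2 ≤ m * p) {ε : ℝ}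
    (hε : ε ∈ Set.Icc 0 1) (hq : ∀ t i, q ζ θ t i ∈ Set.Icc ε (1 - ε)) :
    ENNReal.ofReal (1 - (m * Real.exp (-(n * p * ε / 144)) + m * Real.exp (-(n * p / 16)))) ≤
      P {ω | HasRayleighBounds (lapL (disc (X ω) (R ω 0))) (n * p * ε / 2) (3 * (n * p))} := by
  classical
  have hp0 : 0 ≤ p := (pos_of_mul_pos_right (by linarith) m.cast_nonneg).le
  have hq01 (t : Fin n) (i : Fin m) : q ζ θ t i ∈ Set.Icc 0 1 :=
    Set.Icc_subset_Icc hε.1 (by linarith [hε.1]) (hq t i)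
  refine ofReal_one_sub_le_of_measure_compl_le (by positivity) ?_
  simp only [h.lapL_disc, Set.compl_ofPred]
  refine (measure_le_ofReal_sum_filter P ?_ h.measure_userData_eq_le _).trans
    (ENNReal.ofReal_le_ofReal
      (sum_prod_userWeight_filter_not_hasRayleighBounds_le hp1 hmp hε hq))
  exact fun u => prod_nonneg fun t _ => userWeight_nonneg ⟨hp0, hp1⟩ (hq01 t) (u t)

end Transfer

end RaschRP

open RaschRP in
theorem stmt_11_general {n m : ℕ} {α p κ₁ κ₂ : ℝ} {Ω : Type*} [MeasurableSpace Ω] {P : Measure Ω}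
    [IsProbabilityMeasure P] {ζ : Fin n → ℝ} {θs : Fin m → ℝ} {A X : Ω → Fin n → Fin m → Bool}
    {R : Ω → Fin 1 → Fin n → Fin m → Fin m → Bool} (hα : 0 < α) (hp1 : p ≤ 1) (hκ₁ : 1 ≤ κ₁)
    (hθ : ∀ i j, |θs i - θs j| ≤ Real.log κ₁) (hκ₂ : 1 ≤ κ₂)
    (hζ : ∀ t i, |ζ t - θs i| ≤ Real.log κ₂) (hmp : 2 ≤ m * p)
    (hnp : 288 * (α + 10) * κ₂ * Real.log n ≤ n * p) (hm : (m : ℝ) ≤ n ^ α)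
    (hlaw : HasRaschLaw P p ζ θs A X R) :
    ENNReal.ofReal (1 - 2 / n ^ 10) ≤
      P {ω | HasRayleighBounds (lapL (disc (X ω) (R ω 0))) (n * p / (4 * κ₂)) (3 * (n * p)) ∧
        HasRayleighBounds (lapLz θs (disc (X ω) (R ω 0))) (n * p / (16 * κ₁ * κ₂)) (n * p)} := by
  have hn : n ≠ 0 := by
    rintro rfl
    rw [Nat.cast_zero, Real.zero_rpow hα.ne'] at hm
    norm_num [hm.antisymm m.cast_nonneg] at hmp
  have hlog : 0 ≤ (α + 10) * Real.log n := mul_nonneg (by linarith) (Real.log_natCast_nonneg n)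
  have hnp0 : 0 ≤ n * p := le_trans (by positivity) hnp
  have hlow : m * Real.exp (-(n * p * (1 / (2 * κ₂)) / 144)) ≤ 1 / n ^ 10 := by
    refine mul_exp_neg_le_one_div_pow hn hm ?_
    rw [mul_one_div, div_div, le_div_iff₀ (by positivity)]
    push_cast
    linarith
  have hupp : m * Real.exp (-(n * p / 16)) ≤ 1 / n ^ 10 := by
    refine mul_exp_neg_le_one_div_pow hn hm ?_
    push_cast
    nlinarith
  refine le_trans (ENNReal.ofReal_le_ofReal ?_) ((hlaw.ofReal_le_measure_hasRayleighBounds hp1 hmp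
    ⟨by positivity, ?_⟩ (q_mem_Icc hκ₂ hζ)).trans (measure_mono fun ω hω => ?_))
  · rw [show (2 : ℝ) = 1 + 1 by norm_num, add_div]
    linarith
  · rw [div_le_one (by positivity)]
    linarith
  · exact ⟨hω.mono (le_of_eq (by ring)) le_rfl,
      (hω.lapLz hκ₁ hθ).mono (le_of_eq (by ring)) (by linarith)⟩

open RaschRP in
/-- **Lemma A.3 (Spectral bounds for the item-item Laplacians).**
If `mp ≥ 2`, `np ≥ C κ₂² log n` and `m ≤ n^α`, then with probability at least `1 − 10n^{−10}`:
`np/(4κ₂) ≤ λ_{m−1}(L_L) ≤ λ₁(L_L) ≤ 3np` and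
`np/(16κ₁κ₂) ≤ λ_{m−1}(L_{Lz}) ≤ λ₁(L_{Lz}) ≤ np`.
The eigenvalue bounds are expressed through the Rayleigh quotient (Courant–Fischer):
`λ₁(L) ≤ c` iff `vᵀLv ≤ c‖v‖²` for all `v`, and `λ_{m−1}(L) ≥ c` iff `vᵀLv ≥ c‖v‖²`
for all `v ⊥ 1_m` (these Laplacians annihilate `1_m`). -/
theorem stmt_11 (α : ℝ) (hα : 0 < α) :
    ∃ C : ℝ, 0 < C ∧
      ∀ (n m : ℕ) (p κ₁ κ₂ : ℝ) (Ω : Type) (mΩ : MeasurableSpace Ω) (P : Measure Ω),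
        IsProbabilityMeasure P →
        ∀ (ζ : Fin n → ℝ) (θs : Fin m → ℝ) (A X : Ω → Fin n → Fin m → Bool)
          (R : Ω → Fin 1 → Fin n → Fin m → Fin m → Bool),
          0 < p → p ≤ 1 →
          1 ≤ κ₁ → (∀ i j, |θs i - θs j| ≤ Real.log κ₁) →
          1 ≤ κ₂ → (∀ t i, |ζ t - θs i| ≤ Real.log κ₂) →
          2 ≤ (m : ℝ) * p →
          C * κ₂ ^ 2 * Real.log n ≤ (n : ℝ) * p →
          (m : ℝ) ≤ (n : ℝ) ^ α →
          HasRaschLaw P p ζ θs A X R →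
          ENNReal.ofReal (1 - 10 / (n : ℝ) ^ 10) ≤
            P {ω |
              -- (i) spectral bounds for the unweighted Laplacian `L_L`
              (∀ v : Fin m → ℝ, (∑ i, v i) = 0 →
                (n : ℝ) * p / (4 * κ₂) * (∑ i, v i ^ 2) ≤
                  v ⬝ᵥ (lapL (disc (X ω) (R ω 0)) *ᵥ v)) ∧
              (∀ v : Fin m → ℝ,
                v ⬝ᵥ (lapL (disc (X ω) (R ω 0)) *ᵥ v) ≤ 3 * ((n : ℝ) * p) * (∑ i, v i ^ 2)) ∧
              -- (ii) spectral bounds for the weighted Laplacian `L_{Lz}`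
              (∀ v : Fin m → ℝ, (∑ i, v i) = 0 →
                (n : ℝ) * p / (16 * κ₁ * κ₂) * (∑ i, v i ^ 2) ≤
                  v ⬝ᵥ (lapLz θs (disc (X ω) (R ω 0)) *ᵥ v)) ∧
              (∀ v : Fin m → ℝ,
                v ⬝ᵥ (lapLz θs (disc (X ω) (R ω 0)) *ᵥ v) ≤
                  (n : ℝ) * p * (∑ i, v i ^ 2))} := by
  refine ⟨288 * (α + 10), by positivity, ?_⟩
  intro n m p κ₁ κ₂ Ω _ P hP ζ θs A X R _ hp1 hκ₁ hθ hκ₂ hζ hmp hnp hm hlaw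
  have hnp' : 288 * (α + 10) * κ₂ * Real.log n ≤ n * p := by
    refine le_trans ?_ hnp
    gcongr
    exact le_self_pow₀ hκ₂ two_ne_zero
  refine le_trans (ENNReal.ofReal_le_ofReal ?_)
    ((stmt_11_general hα hp1 hκ₁ hθ hκ₂ hζ hmp hnp' hm hlaw).trans (measure_mono fun ω hω => ?_))
  · gcongr
    norm_num
  · exact ⟨hω.1.1, hω.1.2, hω.2.1, hω.2.2⟩
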